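/- arXiv:1404.3821 — 4 statements merged into one kernel-verified Lean document; each statement's English description precedes it below -/
import Mathlib

section
/- Let 𝓓 = (Ω, 𝓑) be a design with parameter (v, k, d) and b = |𝓑|. Then for every integer i with 1 ≤ i ≤ (v−d+1)/2, the inequality C(v, d+2i−1) ≥ b·∑_{j=0}^{i−1} C(k, d+2i−1−j)·C(v−k, j) holds, i.e. C(v, d+2i−1) ≥ b·( C(k, d+2i−1) + C(k, d+2i−2)·C(v−k, 1) + ⋯ + C(k, d+i)·C(v−k, i−1) ). -/
open Finset

variable {α : Type*} [Fintype α] [DecidableEq α]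

/-- `𝓑` is a design on the finite type `α` of cardinality `v`, with block size `k` and
maximal pairwise block intersection size `d`. -/
def IsDesign (𝓑 : Finset (Finset α)) (v k d : ℕ) : Prop :=
  Fintype.card α = v ∧ 2 ≤ 𝓑.card ∧ d < k ∧ k < v ∧
  (∀ B ∈ 𝓑, B.card = k) ∧
  (∀ B ∈ 𝓑, ∀ C ∈ 𝓑, B ≠ C → (B ∩ C).card ≤ d) ∧
  (∃ B ∈ 𝓑, ∃ C ∈ 𝓑, B ≠ C ∧ (B ∩ C).card = d)

/-- `𝓑` is a `β(i)` design with parameters `(v, k, d)`: a design such that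
`1 ≤ i ≤ (v - d + 1)/2` and every `(d + 2i - 1)`-element subset `X` of `Ω` admits a
unique block `B` with `|X ∩ B| ≥ d + i`. -/
def IsBetaDesign (𝓑 : Finset (Finset α)) (v k d i : ℕ) : Prop :=
  IsDesign 𝓑 v k d ∧ 1 ≤ i ∧ 2 * i ≤ v - d + 1 ∧
  ∀ X : Finset α, X.card = d + 2 * i - 1 →
    ∃! B, B ∈ 𝓑 ∧ d + i ≤ (X ∩ B).card

theorem count_aux (B : Finset α) (n i m : ℕ) (hm : m + i = n + 1) :
    ∑ j ∈ Finset.range i, (B.card.choose (n - j)) * ((Fintype.card α - B.card).choose j)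
      ≤ (((univ : Finset α).powersetCard n).filter (fun X => m ≤ (X ∩ B).card)).card := by
  have h1 : ∑ j ∈ Finset.range i, (B.card.choose (n - j)) *
      ((Fintype.card α - B.card).choose j)
      = ((Finset.range i).sigma
          (fun j => B.powersetCard (n - j) ×ˢ Bᶜ.powersetCard j)).card := by
    rw [card_sigma]
    refine sum_congr rfl fun j _ => ?_
    rw [card_product, card_powersetCard, card_powersetCard, card_compl]
  rw [h1]
  have inter : ∀ S T : Finset α, S ⊆ B → T ⊆ Bᶜ → (S ∪ T) ∩ B = S := by
    intro S T hS hT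
    ext x
    have a := @hS x
    have b := @hT x
    simp only [mem_compl] at b
    simp only [mem_inter, mem_union]
    tauto
  have diff : ∀ S T : Finset α, S ⊆ B → T ⊆ Bᶜ → (S ∪ T) \ B = T := by
    intro S T hS hT
    ext x
    have a := @hS x
    have b := @hT x
    simp only [mem_compl] at b
    simp only [mem_sdiff, mem_union]
    tauto
  refine card_le_card_of_injOn (fun p => p.2.1 ∪ p.2.2) ?_ ?_
  · rintro ⟨j, S, T⟩ h
    simp only [coe_sigma, Set.mem_sigma_iff, mem_coe, Finset.mem_range, mem_product,
      mem_powersetCard] at h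
    obtain ⟨hj, ⟨hS, hSc⟩, hT, hTc⟩ := h
    simp only [mem_coe, mem_filter, mem_powersetCard, subset_univ, true_and]
    rw [inter S T hS hT]
    have hd : Disjoint S T := disjoint_of_subset_left hS
      (disjoint_of_subset_right hT disjoint_compl_right)
    rw [card_union_of_disjoint hd]
    by_cases hjn : j ≤ n
    · omega
    · omega
  · rintro ⟨j, S, T⟩ h ⟨j', S', T'⟩ h' he
    simp only [coe_sigma, Set.mem_sigma_iff, mem_coe, Finset.mem_range, mem_product,
      mem_powersetCard] at h h'
    obtain ⟨hj, ⟨hS, hSc⟩, hT, hTc⟩ := h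
    obtain ⟨hj', ⟨hS', hSc'⟩, hT', hTc'⟩ := h'
    simp only at he
    have e1 : S = S' := by rw [← inter S T hS hT, he, inter S' T' hS' hT']
    have e2 : T = T' := by rw [← diff S T hS hT, he, diff S' T' hS' hT']
    subst e1 e2
    have : j = j' := hTc.symm.trans hTc'
    subst this
    rfl

/-- **Proposition 0 (inequality).** For a design `𝓑` with parameter `(v, k, d)` and
`b = |𝓑|`, for every integer `i` with `1 ≤ i ≤ (v - d + 1)/2`,
`C(v, d+2i-1) ≥ b • ∑_{j=0}^{i-1} C(k, d+2i-1-j) C(v-k, j)`. -/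
theorem block_number_bound (𝓑 : Finset (Finset α)) (v k d : ℕ)
    (hD : IsDesign 𝓑 v k d) (i : ℕ) (hi1 : 1 ≤ i) (hi2 : 2 * i ≤ v - d + 1) :
    𝓑.card * ∑ j ∈ Finset.range i, (k.choose (d + 2 * i - 1 - j)) * ((v - k).choose j)
      ≤ v.choose (d + 2 * i - 1) := by
  obtain ⟨hv, -, -, -, hk, hd, -⟩ := hD
  set n := d + 2 * i - 1 with hn
  have hdisj : Set.PairwiseDisjoint (𝓑 : Set (Finset α)) (fun B =>
      ((univ : Finset α).powersetCard n).filter (fun X => d + i ≤ (X ∩ B).card)) := by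
    intro B hB C hC hBC
    refine Finset.disjoint_left.mpr fun X hX hX' => ?_
    simp only [mem_filter, mem_powersetCard] at hX hX'
    have h1 := card_union_add_card_inter (X ∩ B) (X ∩ C)
    have h2 : ((X ∩ B) ∪ (X ∩ C)).card ≤ X.card :=
      card_le_card (union_subset inter_subset_left inter_subset_left)
    have h3 : ((X ∩ B) ∩ (X ∩ C)).card ≤ (B ∩ C).card :=
      card_le_card (inter_subset_inter inter_subset_right inter_subset_right)
    have h4 := hd B hB C hC hBC
    omega
  calc _ = ∑ B ∈ 𝓑, ∑ j ∈ Finset.range i, (k.choose (n - j)) * ((v - k).choose j) := by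
        rw [sum_const, smul_eq_mul]
    _ ≤ ∑ B ∈ 𝓑, (((univ : Finset α).powersetCard n).filter
          (fun X => d + i ≤ (X ∩ B).card)).card := by
        refine sum_le_sum fun B hB => ?_
        rw [← hk B hB, ← hv]
        exact count_aux B n i (d + i) (by omega)
    _ = _ := (card_biUnion hdisj).symm
    _ ≤ ((univ : Finset α).powersetCard n).card :=
        card_le_card (biUnion_subset.mpr fun B _ => filter_subset _ _)
    _ = v.choose n := by rw [card_powersetCard, card_univ, hv]
end

section
/- Let 𝓓 = (Ω, 𝓑) be a design with parameter (v, k, d), b = |𝓑|, and let i be an integer with 1 ≤ i ≤ (v−d+1)/2. Then equality C(v, d+2i−1) = b·∑_{j=0}^{i−1} C(k, d+2i−1−j)·C(v−k, j) holds if and only if for every (d+2i−1)-element subset X of Ω there exists a block B ∈ 𝓑 with |X ∩ B| ≥ d+i (such a block is then necessarily unique). -/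
open Finset

variable {α : Type*} [Fintype α] [DecidableEq α]

lemma card_fiber_aux (B : Finset α) (m j : ℕ) (hj : j ≤ m) :
    (((univ : Finset α).powersetCard m).filter (fun X => (X \ B).card = j)).card =
      B.card.choose (m - j) * (Fintype.card α - B.card).choose j := by
  rw [← card_compl, ← card_powersetCard (m - j) B, ← card_powersetCard j Bᶜ, ← card_product]
  refine card_bij' (fun X _ => (X ∩ B, X \ B)) (fun p _ => p.1 ∪ p.2) ?_ ?_ ?_ ?_
  · intro X hX
    simp only [mem_filter, mem_powersetCard, mem_product, subset_univ, true_and] at hX ⊢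
    have h := card_inter_add_card_sdiff X B
    refine ⟨⟨inter_subset_right, by omega⟩, ?_, hX.2⟩
    intro x hx
    simp only [mem_sdiff, mem_compl] at hx ⊢
    exact hx.2
  · rintro ⟨P, Q⟩ hp
    simp only [mem_filter, mem_powersetCard, mem_product, subset_univ, true_and] at hp ⊢
    obtain ⟨⟨hP, hPc⟩, hQ, hQc⟩ := hp
    have hd : Disjoint P Q := by
      rw [disjoint_left]
      intro x hx hx'
      exact (mem_compl.mp (hQ hx')) (hP hx)
    refine ⟨by rw [card_union_of_disjoint hd]; omega, ?_⟩
    have : (P ∪ Q) \ B = Q := by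
      ext x
      have h1 := @hP x
      have h2 := @hQ x
      simp only [mem_sdiff, mem_union, mem_compl] at *
      tauto
    rw [this, hQc]
  · intro X _
    ext x
    simp only [mem_union, mem_inter, mem_sdiff]
    tauto
  · rintro ⟨P, Q⟩ hp
    simp only [mem_powersetCard, mem_product] at hp
    obtain ⟨⟨hP, -⟩, hQ, -⟩ := hp
    ext x
    all_goals
      have h1 := @hP x
      have h2 := @hQ x
      simp only [mem_sdiff, mem_inter, mem_union, mem_compl] at *
      tauto

lemma card_good_aux (B : Finset α) (d i : ℕ) (hi : 1 ≤ i) :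
    (((univ : Finset α).powersetCard (d + 2 * i - 1)).filter
        (fun X => d + i ≤ (X ∩ B).card)).card =
      ∑ j ∈ Finset.range i, B.card.choose (d + 2 * i - 1 - j) *
        (Fintype.card α - B.card).choose j := by
  rw [card_eq_sum_card_fiberwise (f := fun X => (X \ B).card) (t := Finset.range i)]
  · refine sum_congr rfl fun j hj => ?_
    rw [mem_range] at hj
    rw [← card_fiber_aux B (d + 2 * i - 1) j (by omega), filter_filter]
    congr 1
    refine filter_congr fun X hX => ?_
    rw [mem_powersetCard] at hX
    have h := card_inter_add_card_sdiff X B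
    constructor
    · exact fun h => h.2
    · intro h'
      exact ⟨by omega, h'⟩
  · intro X hX
    simp only [coe_filter, mem_powersetCard, subset_univ, true_and, Set.mem_setOf_eq] at hX
    have h := card_inter_add_card_sdiff X B
    simp only [coe_range, Set.mem_Iio]
    omega

/-- **Proposition 0 (equality condition).** For a design `𝓑` with parameter `(v, k, d)`,
`b = |𝓑|` and `1 ≤ i ≤ (v - d + 1)/2`, equality
`C(v, d+2i-1) = b • ∑_{j=0}^{i-1} C(k, d+2i-1-j) C(v-k, j)` holds if and only if every
`(d+2i-1)`-element subset `X` of `Ω` admits a block `B ∈ 𝓑` with `|X ∩ B| ≥ d + i`. -/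
theorem block_number_bound_equality_iff (𝓑 : Finset (Finset α)) (v k d : ℕ)
    (hD : IsDesign 𝓑 v k d) (i : ℕ) (hi1 : 1 ≤ i) (hi2 : 2 * i ≤ v - d + 1) :
    v.choose (d + 2 * i - 1) =
      𝓑.card * ∑ j ∈ Finset.range i, (k.choose (d + 2 * i - 1 - j)) * ((v - k).choose j)
    ↔ ∀ X : Finset α, X.card = d + 2 * i - 1 → ∃ B ∈ 𝓑, d + i ≤ (X ∩ B).card := by
  obtain ⟨hv, -, -, -, hk, hint, -⟩ := hD
  set F : Finset α → Finset (Finset α) := fun B =>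
    ((univ : Finset α).powersetCard (d + 2 * i - 1)).filter
        (fun X => d + i ≤ (X ∩ B).card) with hF
  have hdisj : (𝓑 : Set (Finset α)).PairwiseDisjoint F := by
    intro B hB C hC hBC
    change Disjoint (F B) (F C)
    rw [disjoint_left]
    intro X hX hX'
    simp only [hF, mem_filter, mem_powersetCard, subset_univ, true_and] at hX hX'
    have h1 := hint B hB C hC hBC
    have h2 := card_union_add_card_inter (X ∩ B) (X ∩ C)
    have h3 : (X ∩ B ∪ X ∩ C).card ≤ X.card :=
      card_le_card (union_subset inter_subset_left inter_subset_left)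
    have h4 : ((X ∩ B) ∩ (X ∩ C)).card ≤ (B ∩ C).card :=
      card_le_card (inter_subset_inter inter_subset_right inter_subset_right)
    omega
  have hcard : (𝓑.biUnion F).card =
      𝓑.card * ∑ j ∈ Finset.range i, (k.choose (d + 2 * i - 1 - j)) * ((v - k).choose j) := by
    rw [card_biUnion hdisj, sum_const_nat]
    intro B hB
    rw [hF, card_good_aux B d i hi1, hk B hB, hv]
  have hsub : 𝓑.biUnion F ⊆ (univ : Finset α).powersetCard (d + 2 * i - 1) :=
    biUnion_subset.mpr fun B _ => filter_subset _ _
  have hall : ((univ : Finset α).powersetCard (d + 2 * i - 1)).card =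
      v.choose (d + 2 * i - 1) := by
    rw [card_powersetCard, card_univ, hv]
  rw [← hcard, ← hall]
  constructor
  · intro h X hX
    have he := eq_of_subset_of_card_le hsub h.le
    have hm : X ∈ 𝓑.biUnion F := by
      rw [he, mem_powersetCard]
      exact ⟨subset_univ _, hX⟩
    obtain ⟨B, hB, hXB⟩ := mem_biUnion.mp hm
    exact ⟨B, hB, (mem_filter.mp hXB).2⟩
  · intro h
    congr 1
    refine Subset.antisymm (fun X hX => ?_) hsub
    obtain ⟨B, hB, hXB⟩ := h X (mem_powersetCard.mp hX).2
    exact mem_biUnion.mpr ⟨B, hB, mem_filter.mpr ⟨hX, hXB⟩⟩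
end

section
/- Let 𝓓 = (Ω, 𝓑) be a β(i) design with parameter (v, k, d), where i ≥ 3 and v ≥ 2k, and set c = k−d. Assume v does not achieve the upper bound (d+2(i−1))·(k−d)/(i−1), i.e. (i−1)·v < (d+2(i−1))·(k−d). Then v ≤ k + γ₁, where γ₁ = ((2c−2i+2)d + 2(i−1)c − 3i + 4)/(2(i−2)) − (1/(2(i−1)(i−2)))·√( 4(i−1)(c−i+1)(c−2i+3)d² + 4(i−1)(3i−4)(c−i+1)(c−2i+3)d + (i−1)²·(4(2i−3)c² − 4(3i−4)(2i−3)c + 16i³ − 63i² + 80i − 32) ). Moreover, equality v = k + γ₁ holds if and only if the number of blocks B ∈ 𝓑 with |B ∩ X| = d+i−2 is the same for every X ∈ S₁. -/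
open Finset

variable {α : Type*} [Fintype α] [DecidableEq α]

/-- The family `S₁` of all `(d + 2(i-2))`-element subsets `X` of `Ω` such that
`|X ∩ B| ≤ d + i - 2` for every block `B ∈ 𝓑`. -/
def S1 (𝓑 : Finset (Finset α)) (d i : ℕ) : Finset (Finset α) :=
  (Finset.univ : Finset (Finset α)).filter
    (fun X => X.card = d + 2 * (i - 2) ∧ ∀ B ∈ 𝓑, (X ∩ B).card ≤ d + i - 2)

/-- General level family: `(d+2m)`-subsets meeting every block in at most `d+m` points. -/
def SL (𝓑 : Finset (Finset α)) (d m : ℕ) : Finset (Finset α) :=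
  (Finset.univ : Finset (Finset α)).filter
    (fun X => X.card = d + 2 * m ∧ ∀ B ∈ 𝓑, (X ∩ B).card ≤ d + m)

/-- Blocks meeting `X` in exactly `r` points. -/
def NB (𝓑 : Finset (Finset α)) (r : ℕ) (X : Finset α) : Finset (Finset α) :=
  𝓑.filter (fun B => (X ∩ B).card = r)

theorem core_ineq (X B C : Finset α) :
    (X ∩ B).card + (X ∩ C).card ≤ X.card + (B ∩ C).card := by
  rw [← Finset.card_union_add_card_inter]
  apply Nat.add_le_add
  · apply Finset.card_le_card; intro x; simp; tauto
  · apply Finset.card_le_card; intro x; simp; tauto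

theorem card_glue (R P Q : Finset α) (hRP : Disjoint R P) (hRQ : Disjoint R Q)
    (hPQ : Disjoint P Q) (x y : ℕ) :
    ((powersetCard x P ×ˢ powersetCard y Q).image (fun p => R ∪ (p.1 ∪ p.2))).card
      = P.card.choose x * Q.card.choose y := by
  rw [Finset.card_image_of_injOn, Finset.card_product, card_powersetCard, card_powersetCard]
  rintro ⟨U, W⟩ h ⟨U', W'⟩ h' heq
  simp only [coe_product, Set.mem_prod, mem_coe, mem_powersetCard] at h h'
  simp only at heq
  rw [Finset.disjoint_left] at hRP hRQ hPQ
  have hm : ∀ z, z ∈ R ∪ (U ∪ W) ↔ z ∈ R ∪ (U' ∪ W') := by rw [heq]; simp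
  obtain ⟨⟨h1, _⟩, h2, _⟩ := h
  obtain ⟨⟨h3, _⟩, h4, _⟩ := h'
  simp only [mem_union] at hm
  rw [Prod.mk.injEq]
  constructor
  · ext z
    have a1 := @h1 z; have a2 := @h2 z; have a3 := @h3 z; have a4 := @h4 z
    have a5 := @hRP z; have a6 := @hRQ z; have a7 := @hPQ z; have a8 := hm z
    clear h1 h2 h3 h4 hRP hRQ hPQ hm heq
    grind
  · ext z
    have a1 := @h1 z; have a2 := @h2 z; have a3 := @h3 z; have a4 := @h4 z
    have a5 := @hRP z; have a6 := @hRQ z; have a7 := @hPQ z; have a8 := hm z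
    clear h1 h2 h3 h4 hRP hRQ hPQ hm heq
    grind

theorem count_one (B : Finset α) (x y : ℕ) :
    ((univ : Finset (Finset α)).filter
      (fun X => X.card = x + y ∧ (X ∩ B).card = x)).card
      = B.card.choose x * (Fintype.card α - B.card).choose y := by
  rw [← Finset.card_compl, ← card_glue ∅ B Bᶜ (by simp) (by simp) disjoint_compl_right]
  congr 1
  ext X
  simp only [mem_filter, mem_univ, true_and, mem_image, mem_product, mem_powersetCard,
    empty_union, Prod.exists]
  have hs : (X ∩ B).card + (X \ B).card = X.card := Finset.card_inter_add_card_sdiff X B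
  constructor
  · rintro ⟨h1, h2⟩
    refine ⟨X ∩ B, X \ B, ⟨⟨inter_subset_right, h2⟩, ?_, by omega⟩, ?_⟩
    · intro z; simp
    · ext z; simp; tauto
  · rintro ⟨U, W, ⟨⟨h1, h2⟩, h3, h4⟩, rfl⟩
    have hd : Disjoint U W :=
      Finset.disjoint_of_subset_left h1 (Finset.disjoint_of_subset_right h3 disjoint_compl_right)
    have : (U ∪ W) ∩ B = U := by
      ext z
      have a1 := @h1 z; have a2 := @h3 z
      simp at a2 ⊢; tauto
    rw [this, card_union_of_disjoint hd]
    omega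

theorem count_two (B C : Finset α) (d c m : ℕ) (hB : B.card = d + c) (hC : C.card = d + c)
    (hBC : (B ∩ C).card = d) :
    ((univ : Finset (Finset α)).filter
      (fun X => X.card = d + 2 * m ∧ (X ∩ B).card = d + m ∧ (X ∩ C).card = d + m)).card
      = c.choose m * c.choose m := by
  have e1 : (B \ C).card = c := by
    have := Finset.card_inter_add_card_sdiff B C; omega
  have e2 : (C \ B).card = c := by
    have := Finset.card_inter_add_card_sdiff C B; rw [inter_comm] at this; omega
  have hg := card_glue (B ∩ C) (B \ C) (C \ B)
    (by rw [disjoint_left]; intro z; simp; tauto)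
    (by rw [disjoint_left]; intro z; simp; tauto)
    (by rw [disjoint_left]; intro z; simp; tauto) m m
  rw [e1, e2] at hg
  rw [← hg]
  congr 1
  ext X
  simp only [mem_filter, mem_univ, true_and, mem_image, mem_product, mem_powersetCard,
    Prod.exists]
  constructor
  · rintro ⟨h0, h1, h2⟩
    have hu := Finset.card_union_add_card_inter (X ∩ B) (X ∩ C)
    have s1 : ((X ∩ B) ∪ (X ∩ C)) ⊆ X := by intro z; simp; tauto
    have s2 : ((X ∩ B) ∩ (X ∩ C)) ⊆ B ∩ C := by intro z; simp; tauto
    have c1 := card_le_card s1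
    have c2 := card_le_card s2
    have q1 := eq_of_subset_of_card_le s1 (by omega)
    have q2 := eq_of_subset_of_card_le s2 (by omega)
    have hXB := Finset.card_inter_add_card_sdiff (X ∩ B) C
    have hXC := Finset.card_inter_add_card_sdiff (X ∩ C) B
    have r1 : X ∩ B ∩ C = B ∩ C := by
      rw [← q2]; ext z; simp; tauto
    have r2 : X ∩ C ∩ B = B ∩ C := by
      rw [← q2]; ext z; simp; tauto
    rw [r1] at hXB
    rw [r2] at hXC
    refine ⟨(X ∩ B) \ C, (X ∩ C) \ B, ⟨⟨?_, by omega⟩, ?_, by omega⟩, ?_⟩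
    · intro z; simp; tauto
    · intro z; simp; tauto
    · ext z
      have b1 : z ∈ (X ∩ B) ∪ (X ∩ C) ↔ z ∈ X := by rw [q1]
      have b2 : z ∈ (X ∩ B) ∩ (X ∩ C) ↔ z ∈ B ∩ C := by rw [q2]
      simp at b1 b2 ⊢; tauto
  · rintro ⟨U, W, ⟨⟨h1, h2⟩, h3, h4⟩, rfl⟩
    have f1 : (B ∩ C ∪ (U ∪ W)) ∩ B = (B ∩ C) ∪ U := by
      ext z
      have a1 := @h1 z; have a2 := @h3 z
      simp at a1 a2 ⊢; tauto
    have f2 : (B ∩ C ∪ (U ∪ W)) ∩ C = (B ∩ C) ∪ W := by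
      ext z
      have a1 := @h1 z; have a2 := @h3 z
      simp at a1 a2 ⊢; tauto
    have d1 : Disjoint (B ∩ C) U := by
      rw [disjoint_left]; intro z; have a1 := @h1 z; simp at a1 ⊢; tauto
    have d2 : Disjoint (B ∩ C) W := by
      rw [disjoint_left]; intro z; have a1 := @h3 z; simp at a1 ⊢; tauto
    have d3 : Disjoint U W := by
      rw [disjoint_left]; intro z; have a1 := @h1 z; have a2 := @h3 z; simp at a1 a2 ⊢; tauto
    rw [f1, f2, card_union_of_disjoint d1, card_union_of_disjoint d2,
      card_union_of_disjoint (disjoint_union_right.mpr ⟨d1, d2⟩), card_union_of_disjoint d3]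
    omega

theorem mem_SL_of (𝓑 : Finset (Finset α)) (d m : ℕ)
    (hd : ∀ B ∈ 𝓑, ∀ C ∈ 𝓑, B ≠ C → (B ∩ C).card ≤ d) (X B : Finset α) (hB : B ∈ 𝓑)
    (hX : X.card = d + 2 * m) (hXB : (X ∩ B).card = d + m) : X ∈ SL 𝓑 d m := by
  simp only [SL, mem_filter, mem_univ, true_and]
  refine ⟨hX, fun C hC => ?_⟩
  by_cases h : B = C
  · subst h; omega
  · have := core_ineq X B C
    have := hd B hB C hC h
    omega

theorem sum_first (𝓑 : Finset (Finset α)) (d k m : ℕ)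
    (hk : ∀ B ∈ 𝓑, B.card = k)
    (hd : ∀ B ∈ 𝓑, ∀ C ∈ 𝓑, B ≠ C → (B ∩ C).card ≤ d) :
    ∑ X ∈ SL 𝓑 d m, (NB 𝓑 (d + m) X).card
      = 𝓑.card * (k.choose (d + m) * (Fintype.card α - k).choose m) := by
  unfold NB
  simp_rw [Finset.card_filter]
  rw [Finset.sum_comm, Finset.card_eq_sum_ones, Finset.sum_mul]
  apply Finset.sum_congr rfl
  intro B hB
  rw [← Finset.card_filter, one_mul, ← hk B hB, ← count_one]
  congr 1
  ext X
  simp only [mem_filter, mem_univ, true_and]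
  constructor
  · rintro ⟨h1, h2⟩
    simp only [SL, mem_filter, mem_univ, true_and] at h1
    exact ⟨by omega, h2⟩
  · rintro ⟨h1, h2⟩
    exact ⟨mem_SL_of 𝓑 d m hd X B hB (by omega) h2, h2⟩

theorem sum_second (𝓑 : Finset (Finset α)) (d c m : ℕ)
    (hk : ∀ B ∈ 𝓑, B.card = d + c)
    (hd : ∀ B ∈ 𝓑, ∀ C ∈ 𝓑, B ≠ C → (B ∩ C).card ≤ d) :
    ∑ X ∈ SL 𝓑 d m, (NB 𝓑 (d + m) X).card * (NB 𝓑 (d + m) X).card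
      = ∑ X ∈ SL 𝓑 d m, (NB 𝓑 (d + m) X).card
        + (𝓑.offDiag.filter (fun p => (p.1 ∩ p.2).card = d)).card
          * (c.choose m * c.choose m) := by
  have h1 : ∀ X : Finset α, (NB 𝓑 (d + m) X).card * (NB 𝓑 (d + m) X).card
      = (NB 𝓑 (d + m) X).card
        + ∑ p ∈ 𝓑.offDiag, if (X ∩ p.1).card = d + m ∧ (X ∩ p.2).card = d + m then 1 else 0 := by
    intro X
    have e : (NB 𝓑 (d + m) X).offDiag
        = 𝓑.offDiag.filter (fun p => (X ∩ p.1).card = d + m ∧ (X ∩ p.2).card = d + m) := by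
      ext p; simp only [NB, mem_offDiag, mem_filter]; tauto
    rw [← Finset.card_filter, ← e, offDiag_card]
    have : (NB 𝓑 (d + m) X).card ≤ (NB 𝓑 (d + m) X).card * (NB 𝓑 (d + m) X).card :=
      Nat.le_mul_self _
    omega
  rw [Finset.sum_congr rfl (fun X _ => h1 X), Finset.sum_add_distrib]
  congr 1
  rw [Finset.sum_comm, Finset.card_filter, Finset.sum_mul]
  apply Finset.sum_congr rfl
  rintro ⟨B, C⟩ hp
  rw [mem_offDiag] at hp
  obtain ⟨hB, hC, hne⟩ := hp
  simp only at hB hC hne ⊢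
  rw [← Finset.card_filter]
  have hle := hd B hB C hC hne
  split_ifs with h
  · rw [one_mul, ← count_two B C d c m (hk B hB) (hk C hC) h]
    congr 1
    ext X
    simp only [mem_filter, mem_univ, true_and]
    constructor
    · rintro ⟨h1, h2⟩
      simp only [SL, mem_filter, mem_univ, true_and] at h1
      exact ⟨by omega, h2⟩
    · rintro ⟨h1, h2⟩
      exact ⟨mem_SL_of 𝓑 d m hd X B hB (by omega) h2.1, h2⟩
  · rw [zero_mul, Finset.card_eq_zero, Finset.filter_eq_empty_iff]
    rintro X hX ⟨h1, h2⟩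
    simp only [SL, mem_filter, mem_univ, true_and] at hX
    have := core_ineq X B C
    omega

theorem level_const (𝓑 : Finset (Finset α)) (d c m : ℕ)
    (hk : ∀ B ∈ 𝓑, B.card = d + c)
    (hb : ∀ X : Finset α, X.card = d + 2 * m + 1 → ∃! B, B ∈ 𝓑 ∧ d + m + 1 ≤ (X ∩ B).card)
    (Y : Finset α) (hY : Y ∈ SL 𝓑 d m) :
    (NB 𝓑 (d + m) Y).card * (c - m) = Fintype.card α - (d + 2 * m) := by
  simp only [SL, mem_filter, mem_univ, true_and] at hY
  obtain ⟨hY1, hY2⟩ := hY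
  have key : ∀ p ∈ Yᶜ, ((NB 𝓑 (d + m) Y).filter (fun B => p ∈ B)).card = 1 := by
    intro p hp
    rw [mem_compl] at hp
    obtain ⟨B, ⟨hB, hBc⟩, hu⟩ := hb (insert p Y) (by rw [card_insert_of_notMem hp, hY1])
    rw [Finset.card_eq_one]
    refine ⟨B, ?_⟩
    have hmem : ∀ C, p ∈ C → (insert p Y ∩ C).card = (Y ∩ C).card + 1 := by
      intro C hC
      rw [insert_inter_of_mem hC, card_insert_of_notMem (by simp [hp])]
    have hnm : ∀ C, p ∉ C → (insert p Y ∩ C).card = (Y ∩ C).card := by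
      intro C hC
      rw [insert_inter_of_notMem hC]
    ext C
    simp only [NB, mem_filter, mem_singleton]
    constructor
    · rintro ⟨⟨h1, h2⟩, h3⟩
      exact hu C ⟨h1, by rw [hmem C h3]; omega⟩
    · rintro rfl
      have := hY2 C hB
      by_cases hpC : p ∈ C
      · rw [hmem C hpC] at hBc
        exact ⟨⟨hB, by omega⟩, hpC⟩
      · rw [hnm C hpC] at hBc; omega
  rw [← hY1, ← card_compl, Finset.card_eq_sum_ones Yᶜ, ← Finset.sum_congr rfl key]
  simp_rw [Finset.card_filter]
  rw [Finset.sum_comm, Finset.card_eq_sum_ones, Finset.sum_mul]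
  apply Finset.sum_congr rfl
  intro B hB
  simp only [NB, mem_filter] at hB
  rw [← Finset.card_filter, one_mul]
  have e : Yᶜ.filter (fun p => p ∈ B) = B \ Y := by ext z; simp; tauto
  rw [e]
  have := Finset.card_inter_add_card_sdiff B Y
  rw [inter_comm, hk B hB.1] at this
  omega

theorem up_count (𝓑 : Finset (Finset α)) (d c m : ℕ)
    (hk : ∀ B ∈ 𝓑, B.card = d + c)
    (hd : ∀ B ∈ 𝓑, ∀ C ∈ 𝓑, B ≠ C → (B ∩ C).card ≤ d)
    (X : Finset α) (hX : X ∈ SL 𝓑 d m) :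
    ((powersetCard 2 Xᶜ).filter (fun T => X ∪ T ∈ SL 𝓑 d (m + 1))).card
      + (NB 𝓑 (d + m) X).card * (c - m).choose 2
      = (Fintype.card α - (d + 2 * m)).choose 2 := by
  simp only [SL, mem_filter, mem_univ, true_and] at hX
  obtain ⟨hX1, hX2⟩ := hX
  have key : ∀ T ∈ powersetCard 2 Xᶜ, (1 : ℕ) = (if X ∪ T ∈ SL 𝓑 d (m + 1) then 1 else 0)
      + ((NB 𝓑 (d + m) X).filter (fun B => T ⊆ B)).card := by
    intro T hT
    rw [mem_powersetCard] at hT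
    obtain ⟨hT1, hT2⟩ := hT
    have hdis : Disjoint X T := by
      rw [disjoint_left]; intro z hz hz'; have := hT1 hz'; simp at this; exact this hz
    have hc : (X ∪ T).card = d + 2 * (m + 1) := by
      rw [card_union_of_disjoint hdis]; omega
    have hi : ∀ B, ((X ∪ T) ∩ B).card = (X ∩ B).card + (T ∩ B).card := by
      intro B
      rw [union_inter_distrib_right, card_union_of_disjoint]
      exact disjoint_of_subset_left inter_subset_left
        (disjoint_of_subset_right inter_subset_left hdis)
    have hTB : ∀ B, (T ∩ B).card = 2 ↔ T ⊆ B := by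
      intro B
      constructor
      · intro h
        have := eq_of_subset_of_card_le (inter_subset_left : T ∩ B ⊆ T) (by omega)
        rw [← this]; exact inter_subset_right
      · intro h; rw [inter_eq_left.mpr h, hT2]
    have hTle : ∀ B, (T ∩ B).card ≤ 2 := fun B => hT2 ▸ card_le_card inter_subset_left
    split_ifs with h
    · have : (NB 𝓑 (d + m) X).filter (fun B => T ⊆ B) = ∅ := by
        rw [filter_eq_empty_iff]
        intro B hB hTB'
        simp only [NB, mem_filter] at hB
        simp only [SL, mem_filter, mem_univ, true_and] at h
        have h1 := h.2 B hB.1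
        rw [hi, (hTB B).mpr hTB'] at h1
        omega
      rw [this]; simp
    · rw [zero_add, eq_comm, Finset.card_eq_one]
      simp only [SL, mem_filter, mem_univ, true_and, not_and, not_forall, not_le] at h
      obtain ⟨B, hB, hlt⟩ := h hc
      refine ⟨B, ?_⟩
      have h3 := hi B
      have h4 := hX2 B hB
      have h5 := hTle B
      ext C
      simp only [NB, mem_filter, mem_singleton]
      constructor
      · rintro ⟨⟨h1, h2⟩, h6⟩
        by_contra hne
        have := core_ineq (X ∪ T) C B
        have := hd C h1 B hB hne
        have := hi C
        rw [(hTB C).mpr h6] at this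
        omega
      · rintro rfl
        exact ⟨⟨hB, by omega⟩, (hTB C).mp (by omega)⟩
  rw [← hX1, ← card_compl, ← card_powersetCard, Finset.card_eq_sum_ones (powersetCard 2 Xᶜ),
    Finset.sum_congr rfl key, Finset.sum_add_distrib, ← Finset.card_filter]
  congr 1
  simp_rw [Finset.card_filter]
  rw [Finset.sum_comm, Finset.card_eq_sum_ones, Finset.sum_mul]
  apply Finset.sum_congr rfl
  intro B hB
  simp only [NB, mem_filter] at hB
  rw [← Finset.card_filter, one_mul]
  have e : (powersetCard 2 Xᶜ).filter (fun T => T ⊆ B) = powersetCard 2 (B \ X) := by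
    ext T
    simp only [mem_filter, mem_powersetCard, sdiff_eq_inter_compl, subset_inter_iff]
    tauto
  rw [e, card_powersetCard]
  have := Finset.card_inter_add_card_sdiff B X
  rw [inter_comm, hk B hB.1] at this
  congr 1
  omega

theorem card_sdiff_inter_eq (Y T B : Finset α) (hT : T ⊆ Y) :
    ((Y \ T) ∩ B).card + (T ∩ B).card = (Y ∩ B).card := by
  have h : Y ∩ B = (Y \ T) ∩ B ∪ T ∩ B := by
    ext z; have := @hT z; simp; tauto
  rw [h, card_union_of_disjoint]
  rw [disjoint_left]; intro z; simp; tauto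

theorem down_count (𝓑 : Finset (Finset α)) (d m : ℕ)
    (hd : ∀ B ∈ 𝓑, ∀ C ∈ 𝓑, B ≠ C → (B ∩ C).card ≤ d)
    (Y : Finset α) (hY : Y ∈ SL 𝓑 d (m + 1)) :
    ((powersetCard 2 Y).filter (fun T => Y \ T ∈ SL 𝓑 d m)).card
      + (NB 𝓑 (d + (m + 1)) Y).card * (m + 1).choose 2
      = (d + 2 * (m + 1)).choose 2 := by
  simp only [SL, mem_filter, mem_univ, true_and] at hY
  obtain ⟨hY1, hY2⟩ := hY
  have key : ∀ T ∈ powersetCard 2 Y, (1 : ℕ) = (if Y \ T ∈ SL 𝓑 d m then 1 else 0)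
      + ((NB 𝓑 (d + (m + 1)) Y).filter (fun B => T ∩ B = ∅)).card := by
    intro T hT
    rw [mem_powersetCard] at hT
    obtain ⟨hT1, hT2⟩ := hT
    have hc : (Y \ T).card = d + 2 * m := by
      rw [card_sdiff_of_subset hT1]; omega
    have hi : ∀ B, ((Y \ T) ∩ B).card + (T ∩ B).card = (Y ∩ B).card :=
      fun B => card_sdiff_inter_eq Y T B hT1
    split_ifs with h
    · have : (NB 𝓑 (d + (m + 1)) Y).filter (fun B => T ∩ B = ∅) = ∅ := by
        rw [filter_eq_empty_iff]
        intro B hB hTB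
        simp only [NB, mem_filter] at hB
        simp only [SL, mem_filter, mem_univ, true_and] at h
        have h1 := h.2 B hB.1
        have h2 := hi B
        rw [hTB, card_empty] at h2
        omega
      rw [this]; simp
    · rw [zero_add, eq_comm, Finset.card_eq_one]
      simp only [SL, mem_filter, mem_univ, true_and, not_and, not_forall, not_le] at h
      obtain ⟨B, hB, hlt⟩ := h hc
      refine ⟨B, ?_⟩
      have h3 := hi B
      have h4 := hY2 B hB
      ext C
      simp only [NB, mem_filter, mem_singleton]
      constructor
      · rintro ⟨⟨h1, h2⟩, h6⟩
        by_contra hne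
        have := core_ineq (Y \ T) C B
        have := hd C h1 B hB hne
        have := hi C
        rw [h6, card_empty] at this
        omega
      · rintro rfl
        exact ⟨⟨hB, by omega⟩, card_eq_zero.mp (by omega)⟩
  rw [← hY1, ← card_powersetCard, Finset.card_eq_sum_ones (powersetCard 2 Y),
    Finset.sum_congr rfl key, Finset.sum_add_distrib, ← Finset.card_filter]
  congr 1
  simp_rw [Finset.card_filter]
  rw [Finset.sum_comm, Finset.card_eq_sum_ones, Finset.sum_mul]
  apply Finset.sum_congr rfl
  intro B hB
  simp only [NB, mem_filter] at hB
  rw [← Finset.card_filter, one_mul]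
  have e : (powersetCard 2 Y).filter (fun T => T ∩ B = ∅) = powersetCard 2 (Y \ B) := by
    ext T
    simp only [mem_filter, mem_powersetCard, subset_sdiff, disjoint_iff_inter_eq_empty]
    tauto
  rw [e, card_powersetCard]
  have := Finset.card_inter_add_card_sdiff Y B
  congr 1
  omega

theorem flags (S S' : Finset (Finset α)) :
    ∑ X ∈ S, ((powersetCard 2 Xᶜ).filter (fun T => X ∪ T ∈ S')).card
      = ∑ Y ∈ S', ((powersetCard 2 Y).filter (fun T => Y \ T ∈ S)).card := by
  rw [← Finset.card_sigma, ← Finset.card_sigma]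
  refine Finset.card_bij' (fun p _ => ⟨p.1 ∪ p.2, p.2⟩) (fun p _ => ⟨p.1 \ p.2, p.2⟩)
    ?_ ?_ ?_ ?_
  · rintro ⟨X, T⟩ h
    simp only [mem_sigma, mem_filter, mem_powersetCard] at h ⊢
    obtain ⟨h1, ⟨h2, h3⟩, h4⟩ := h
    refine ⟨h4, ⟨subset_union_right, h3⟩, ?_⟩
    have : (X ∪ T) \ T = X := by
      ext z; have := @h2 z; simp at this ⊢; tauto
    rwa [this]
  · rintro ⟨Y, T⟩ h
    simp only [mem_sigma, mem_filter, mem_powersetCard] at h ⊢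
    obtain ⟨h1, ⟨h2, h3⟩, h4⟩ := h
    refine ⟨h4, ⟨?_, h3⟩, ?_⟩
    · intro z hz; simp [hz]
    · rwa [sdiff_union_of_subset h2]
  · rintro ⟨X, T⟩ h
    simp only [mem_sigma, mem_filter, mem_powersetCard] at h ⊢
    obtain ⟨h1, ⟨h2, h3⟩, h4⟩ := h
    have : (X ∪ T) \ T = X := by
      ext z; have := @h2 z; simp at this ⊢; tauto
    rw [this]
  · rintro ⟨Y, T⟩ h
    simp only [mem_sigma, mem_filter, mem_powersetCard] at h ⊢
    obtain ⟨h1, ⟨h2, h3⟩, h4⟩ := h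
    rw [sdiff_union_of_subset h2]

/-- Double counting between two consecutive levels. -/
theorem flag_identity (𝓑 : Finset (Finset α)) (d c m : ℕ)
    (hk : ∀ B ∈ 𝓑, B.card = d + c)
    (hd : ∀ B ∈ 𝓑, ∀ C ∈ 𝓑, B ≠ C → (B ∩ C).card ≤ d) :
    (SL 𝓑 d m).card * (Fintype.card α - (d + 2 * m)).choose 2
      + (∑ Y ∈ SL 𝓑 d (m + 1), (NB 𝓑 (d + (m + 1)) Y).card) * (m + 1).choose 2
    = (SL 𝓑 d (m + 1)).card * (d + 2 * (m + 1)).choose 2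
      + (∑ X ∈ SL 𝓑 d m, (NB 𝓑 (d + m) X).card) * (c - m).choose 2 := by
  have h1 := Finset.sum_congr rfl (fun X hX => up_count 𝓑 d c m hk hd X hX)
  have h2 := Finset.sum_congr rfl (fun Y hY => down_count 𝓑 d m hd Y hY)
  rw [Finset.sum_add_distrib, ← Finset.sum_mul, Finset.sum_const, smul_eq_mul] at h1 h2
  have h3 := flags (SL 𝓑 d m) (SL 𝓑 d (m + 1))
  omega

/-- Cauchy-Schwarz with equality case. -/
theorem variance_fact {ι : Type*} (S : Finset ι) (f : ι → ℕ) (hS : S.Nonempty) :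
    0 ≤ (S.card : ℝ) * (∑ x ∈ S, (f x : ℝ) * f x) - (∑ x ∈ S, (f x : ℝ)) ^ 2 ∧
    ((S.card : ℝ) * (∑ x ∈ S, (f x : ℝ) * f x) - (∑ x ∈ S, (f x : ℝ)) ^ 2 = 0 ↔
      ∃ m : ℕ, ∀ x ∈ S, f x = m) := by
  have hs : (0 : ℝ) < S.card := by exact_mod_cast hS.card_pos
  set A := ∑ x ∈ S, (f x : ℝ) with hA
  set Q := ∑ x ∈ S, (f x : ℝ) * f x with hQ
  have hid : ∑ x ∈ S, ((S.card : ℝ) * f x - A) ^ 2 = S.card * (S.card * Q - A ^ 2) := by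
    have : ∀ x ∈ S, ((S.card : ℝ) * f x - A) ^ 2
        = (S.card : ℝ) ^ 2 * ((f x : ℝ) * f x) - 2 * S.card * A * f x + A ^ 2 := by
      intro x _; ring
    rw [Finset.sum_congr rfl this, Finset.sum_add_distrib, Finset.sum_sub_distrib,
      ← Finset.mul_sum, ← Finset.mul_sum, ← hA, ← hQ, Finset.sum_const, nsmul_eq_mul]
    ring
  have hnn : 0 ≤ ∑ x ∈ S, ((S.card : ℝ) * f x - A) ^ 2 :=
    Finset.sum_nonneg (fun x _ => sq_nonneg _)
  refine ⟨?_, ?_, ?_⟩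
  · rw [hid] at hnn
    exact nonneg_of_mul_nonneg_right hnn hs
  · intro h0
    rw [h0, mul_zero, Finset.sum_eq_zero_iff_of_nonneg (fun x _ => sq_nonneg _)] at hid
    obtain ⟨x0, hx0⟩ := hS
    refine ⟨f x0, fun x hx => ?_⟩
    have h1 : (S.card : ℝ) * f x - A = 0 := by simpa using hid x hx
    have h2 : (S.card : ℝ) * f x0 - A = 0 := by simpa using hid x0 hx0
    have h3 : (f x : ℝ) = f x0 := mul_left_cancel₀ hs.ne' (by linarith)
    exact_mod_cast h3
  · rintro ⟨m, hm⟩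
    have e1 : A = S.card * m := by
      rw [hA, Finset.sum_congr rfl (fun x hx => by rw [hm x hx]), Finset.sum_const, nsmul_eq_mul]
    have e2 : Q = S.card * (m * m) := by
      rw [hQ, Finset.sum_congr rfl (fun x hx => by rw [hm x hx]), Finset.sum_const, nsmul_eq_mul]
    rw [e1, e2]; ring

/-- The real algebra relating all counts. -/
theorem algebra_core (s s0 A A0 R R0 g j e w t : ℝ) (hg : 0 < g) (hj : 0 < j) (he : 1 < e)
    (ht : t = w + e - 2)
    (h1 : A0 * (g * j) = A * (e * w))
    (h2 : s0 * t = A0 * (e - 1))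
    (h3 : (A0 + R0) * (e - 1) = t * A0)
    (h4 : R0 * j ^ 2 = R * e ^ 2)
    (h5 : s * ((w + e) * (w + e - 1)) + A0 * (j * (j - 1))
      = s0 * ((g + j) * (g + j - 1)) + A * (e * (e - 1))) :
    (s * (A + R) - A ^ 2) * (((w + e) * (w + e - 1)) * g * j * t * (g * e * (e - 1)))
      = A ^ 2 * e * ((g * j * t * (e - 1) + w * (e - 1) * (g + j) * (g + j - 1)
          - w * t * j * (j - 1)) * (g * e * (e - 1) + j * w * (w - 1))
          - (w + e) * (w + e - 1) * g ^ 2 * (e - 1) * j * t) := by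
  have he0 : e ≠ 0 := by linarith
  have hR : R * (g * e * (e - 1)) = A * (j * w * (w - 1)) := by
    have hR0 : R0 * (e - 1) = (w - 1) * A0 := by rw [ht] at h3; linarith
    have : (R * (g * e * (e - 1))) * (e * j) = (A * (j * w * (w - 1))) * (e * j) := by
      linear_combination (-(g * (e - 1) * j)) * h4 + (g * j ^ 3) * hR0 + (j ^ 2 * (w - 1)) * h1
    exact mul_right_cancel₀ (mul_ne_zero he0 hj.ne') this
  have hs : s * (((w + e) * (w + e - 1)) * g * j * t)
      = A * e * (g * j * t * (e - 1) + w * (e - 1) * (g + j) * (g + j - 1)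
          - w * t * j * (j - 1)) := by
    linear_combination (g * j * t) * h5 + (g * j * (g + j) * (g + j - 1)) * h2
      + ((e - 1) * (g + j) * (g + j - 1) - t * j * (j - 1)) * h1
  linear_combination ((A + R) * (g * e * (e - 1))) * hs
    + (A * e * (g * j * t * (e - 1) + w * (e - 1) * (g + j) * (g + j - 1)
          - w * t * j * (j - 1))) * hR

/-- The factorization of the quartic. -/
theorem quartic_factor (v c d i k e j g w t L D : ℝ) (hk : k = c + d) (he : e = c - i + 2)
    (hj : j = i - 1) (hg : g = d + i - 1) (hw : w = v - k - i + 2) (ht : t = w + e - 2)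
    (hL : L = (2 * c - 2 * i + 2) * d + 2 * (i - 1) * c - 3 * i + 4)
    (hD : D = 4 * (i - 1) * (c - i + 1) * (c - 2 * i + 3) * d ^ 2
           + 4 * (i - 1) * (3 * i - 4) * (c - i + 1) * (c - 2 * i + 3) * d
           + (i - 1) ^ 2 * (4 * (2 * i - 3) * c ^ 2 - 4 * (3 * i - 4) * (2 * i - 3) * c
              + 16 * i ^ 3 - 63 * i ^ 2 + 80 * i - 32)) :
    4 * j * (j - 1) * ((g * j * t * (e - 1) + w * (e - 1) * (g + j) * (g + j - 1)
          - w * t * j * (j - 1)) * (g * e * (e - 1) + j * w * (w - 1))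
          - (w + e) * (w + e - 1) * g ^ 2 * (e - 1) * j * t)
      = ((d + 2 * (i - 1)) * c - (i - 1) * v) * w
        * ((2 * (i - 1) * (i - 2) * (v - k) - (i - 1) * L) ^ 2 - D) := by
  subst hk he hj hg hw ht hL hD
  ring

/-- From the sign of the quadratic to the bound with the square root. -/
theorem root_bound (v k i L D γ : ℝ) (hi : 2 < i)
    (hγ : γ = L / (2 * (i - 2)) - (1 / (2 * (i - 1) * (i - 2))) * Real.sqrt D)
    (hlt : 2 * (i - 1) * (i - 2) * (v - k) - (i - 1) * L < 0)
    (hq : 0 ≤ (2 * (i - 1) * (i - 2) * (v - k) - (i - 1) * L) ^ 2 - D) :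
    v ≤ k + γ ∧ (v = k + γ ↔ (2 * (i - 1) * (i - 2) * (v - k) - (i - 1) * L) ^ 2 - D = 0) := by
  have p1 : 0 < i - 1 := by linarith
  have p2 : 0 < i - 2 := by linarith
  have p3 : 0 < 2 * (i - 1) * (i - 2) := by positivity
  set z := 2 * (i - 1) * (i - 2) * (v - k) - (i - 1) * L with hz
  have hg : 2 * (i - 1) * (i - 2) * (v - (k + γ)) = z + Real.sqrt D := by
    rw [hγ, hz]; field_simp; ring
  have hs : Real.sqrt D ≤ -z := by
    rw [Real.sqrt_le_left (by linarith)]; nlinarith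
  refine ⟨?_, ?_, ?_⟩
  · by_contra hcon
    push Not at hcon
    have : 0 < 2 * (i - 1) * (i - 2) * (v - (k + γ)) := mul_pos p3 (by linarith)
    linarith
  · intro h
    rw [h, sub_self, mul_zero] at hg
    have hpos : 0 < Real.sqrt D := by linarith
    have hD := Real.sqrt_pos.mp hpos
    have := Real.sq_sqrt hD.le
    have e : z = -Real.sqrt D := by linarith
    rw [e]; linarith [neg_sq (Real.sqrt D)]
  · intro h
    have hD : D = (-z) ^ 2 := by linarith [neg_sq z]
    rw [hD, Real.sqrt_sq (by linarith), add_neg_cancel] at hg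
    have := (mul_eq_zero.mp hg).resolve_left p3.ne'
    linarith

set_option maxHeartbeats 2000000 in
/-- **Theorem 1.** Let `𝓑` be a `β(i)` design with parameter `(v, k, d)`, `i ≥ 3`,
`v ≥ 2k`, `c = k - d`, and suppose `v` does not achieve the upper bound
`(d + 2(i-1))(k-d)/(i-1)`.  Then `v ≤ k + γ₁`, with equality if and only if the number
of blocks `B` with `|B ∩ X| = d + i - 2` does not depend on the choice of `X ∈ S₁`. -/
theorem beta_design_upper_bound_v (𝓑 : Finset (Finset α)) (v k d i c : ℕ)
    (hB : IsBetaDesign 𝓑 v k d i) (hi : 3 ≤ i) (hv : 2 * k ≤ v) (hc : c = k - d)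
    (hub : (i - 1) * v < (d + 2 * (i - 1)) * (k - d))
    (γ₁ : ℝ)
    (hγ₁ : γ₁ = ((2 * (c : ℝ) - 2 * (i : ℝ) + 2) * (d : ℝ) + 2 * ((i : ℝ) - 1) * (c : ℝ)
        - 3 * (i : ℝ) + 4) / (2 * ((i : ℝ) - 2))
      - (1 / (2 * ((i : ℝ) - 1) * ((i : ℝ) - 2))) * Real.sqrt
          (4 * ((i : ℝ) - 1) * ((c : ℝ) - (i : ℝ) + 1) * ((c : ℝ) - 2 * (i : ℝ) + 3) * (d : ℝ) ^ 2
           + 4 * ((i : ℝ) - 1) * (3 * (i : ℝ) - 4) * ((c : ℝ) - (i : ℝ) + 1)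
              * ((c : ℝ) - 2 * (i : ℝ) + 3) * (d : ℝ)
           + ((i : ℝ) - 1) ^ 2 * (4 * (2 * (i : ℝ) - 3) * (c : ℝ) ^ 2
              - 4 * (3 * (i : ℝ) - 4) * (2 * (i : ℝ) - 3) * (c : ℝ)
              + 16 * (i : ℝ) ^ 3 - 63 * (i : ℝ) ^ 2 + 80 * (i : ℝ) - 32))) :
    (v : ℝ) ≤ (k : ℝ) + γ₁ ∧
    ((v : ℝ) = (k : ℝ) + γ₁ ↔ ∃ m : ℕ, ∀ X ∈ S1 𝓑 d i,
      (𝓑.filter (fun B => (X ∩ B).card = d + i - 2)).card = m) := by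
  obtain ⟨⟨hcard, hb2, hdk, hkv, hk, hd, -⟩, -, -, hbeta⟩ := hB
  obtain ⟨a, rfl⟩ : ∃ a, i = a + 2 := ⟨i - 2, by omega⟩
  obtain rfl : k = d + c := by omega
  have hsub : d + c - d = c := by omega
  have e1 : a + 2 - 1 = a + 1 := by omega
  rw [hsub, e1] at hub
  have hS1 : S1 𝓑 d (a + 2) = SL 𝓑 d a := by
    unfold S1 SL
    have q1 : a + 2 - 2 = a := by omega
    have q2 : d + (a + 2) - 2 = d + a := by omega
    rw [q1, q2]
  have q2 : d + (a + 2) - 2 = d + a := by omega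
  rw [hS1, q2]
  -- `c` is large
  have hcbig : 2 * a + 3 ≤ c := by
    by_contra hcon
    have h1 : c ≤ 2 * a + 2 := by omega
    have h2 : d * c ≤ d * (2 * a + 2) := Nat.mul_le_mul_left _ h1
    have h3 : (a + 1) * (2 * (d + c)) ≤ (a + 1) * v := Nat.mul_le_mul_left _ hv
    nlinarith
  have hbeta' : ∀ X : Finset α, X.card = d + 2 * (a + 1) + 1 →
      ∃! B, B ∈ 𝓑 ∧ d + (a + 1) + 1 ≤ (X ∩ B).card := by
    intro X hX
    exact hbeta X (by omega)
  have F1 := sum_first 𝓑 d (d + c) a hk hd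
  have F1' := sum_first 𝓑 d (d + c) (a + 1) hk hd
  have F2 := sum_second 𝓑 d c a hk hd
  have F2' := sum_second 𝓑 d c (a + 1) hk hd
  have F3 := flag_identity 𝓑 d c a hk hd
  have F4 := level_const 𝓑 d c (a + 1) hk hbeta'
  rw [hcard] at F1 F1' F3 F4
  have hAposN : 0 < ∑ X ∈ SL 𝓑 d a, (NB 𝓑 (d + a) X).card := by
    rw [F1]
    have p1 : 0 < 𝓑.card := by omega
    have p2 : 0 < (d + c).choose (d + a) := Nat.choose_pos (by omega)
    have p3 : 0 < (v - (d + c)).choose a := Nat.choose_pos (by omega)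
    positivity
  have hne : (SL 𝓑 d a).Nonempty := by
    rw [Finset.nonempty_iff_ne_empty]
    intro h0
    rw [h0] at hAposN; simp at hAposN
  obtain ⟨V1, V2⟩ := variance_fact (SL 𝓑 d a) (fun X => (NB 𝓑 (d + a) X).card) hne
  have hkc : (d + c).choose (d + (a + 1)) * (d + a + 1) = (d + c).choose (d + a) * (c - a) := by
    have := Nat.choose_succ_right_eq (d + c) (d + a)
    rwa [show d + c - (d + a) = c - a by omega] at this
  have hvc := Nat.choose_succ_right_eq (v - (d + c)) a
  have hcc := Nat.choose_succ_right_eq c a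
  have L1 : (∑ Y ∈ SL 𝓑 d (a + 1), (NB 𝓑 (d + (a + 1)) Y).card) * (c - (a + 1))
      = (SL 𝓑 d (a + 1)).card * (v - (d + 2 * (a + 1))) := by
    rw [Finset.sum_mul, Finset.sum_congr rfl F4, Finset.sum_const, smul_eq_mul]
  have L2 : (∑ Y ∈ SL 𝓑 d (a + 1), (NB 𝓑 (d + (a + 1)) Y).card
        * (NB 𝓑 (d + (a + 1)) Y).card) * (c - (a + 1))
      = (v - (d + 2 * (a + 1))) * ∑ Y ∈ SL 𝓑 d (a + 1), (NB 𝓑 (d + (a + 1)) Y).card := by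
    rw [Finset.sum_mul, Finset.mul_sum]
    apply Finset.sum_congr rfl
    intro Y hY
    rw [mul_assoc, F4 Y hY, mul_comm]
  rw [F2'] at L2
  set A := ∑ X ∈ SL 𝓑 d a, (NB 𝓑 (d + a) X).card with hA
  set A0 := ∑ Y ∈ SL 𝓑 d (a + 1), (NB 𝓑 (d + (a + 1)) Y).card with hA0
  set s := (SL 𝓑 d a).card with hs
  set s0 := (SL 𝓑 d (a + 1)).card with hs0
  set P := (𝓑.offDiag.filter (fun p => (p.1 ∩ p.2).card = d)).card with hP
  have VA : (∑ X ∈ SL 𝓑 d a, ((NB 𝓑 (d + a) X).card : ℝ)) = A := by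
    rw [hA]; push_cast; rfl
  have VQ : (∑ X ∈ SL 𝓑 d a, ((NB 𝓑 (d + a) X).card : ℝ) * (NB 𝓑 (d + a) X).card)
      = (A : ℝ) + P * ((c.choose a : ℝ) * c.choose a) := by
    exact_mod_cast F2
  rw [VA, VQ] at V1 V2
  clear_value A A0 s s0 P
  obtain ⟨w, hw⟩ : ∃ w, v = d + c + a + w := ⟨v - (d + c + a), by omega⟩
  obtain ⟨e, he⟩ : ∃ e, c = a + 1 + e := ⟨c - (a + 1), by omega⟩
  have x1 : c - a = e + 1 := by omega
  have x2 : c - (a + 1) = e := by omega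
  have x3 : v - (d + c) - a = w := by omega
  have x4 : v - (d + 2 * (a + 1)) = w + e - 1 := by omega
  have x5 : v - (d + 2 * a) = w + e + 1 := by omega
  have hw1 : 1 ≤ w := by omega
  have he1 : 1 ≤ e := by omega
  rw [x1] at hkc hcc F3
  rw [x2, x4] at L1 L2
  rw [x5] at F3
  rw [x3] at hvc
  have G1 : (A0 : ℝ) * (((d : ℝ) + a + 1) * (a + 1)) = A * ((e + 1) * w) := by
    have : A0 * ((d + a + 1) * (a + 1)) = A * ((e + 1) * w) := by
      rw [F1', F1]
      calc _ = 𝓑.card * (((d + c).choose (d + (a + 1)) * (d + a + 1))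
              * ((v - (d + c)).choose (a + 1) * (a + 1))) := by ring
        _ = _ := by rw [hkc, hvc]; ring
    exact_mod_cast this
  have hwe : ((w + e - 1 : ℕ) : ℝ) = w + e - 1 := by
    rw [Nat.cast_sub (by omega)]; push_cast; ring
  have G2 : (s0 : ℝ) * (w + e - 1) = A0 * e := by
    rw [← hwe]; exact_mod_cast L1.symm
  have G3 : ((A0 : ℝ) + P * ((c.choose (a + 1) : ℝ) * c.choose (a + 1))) * e
      = (w + e - 1) * A0 := by
    rw [← hwe]; exact_mod_cast L2
  have hccR : (c.choose (a + 1) : ℝ) * (a + 1) = c.choose a * (e + 1) := by exact_mod_cast hcc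
  have G4 : ((P : ℝ) * ((c.choose (a + 1) : ℝ) * c.choose (a + 1))) * ((a : ℝ) + 1) ^ 2
      = (P * ((c.choose a : ℝ) * c.choose a)) * ((e : ℝ) + 1) ^ 2 := by
    calc _ = (P : ℝ) * ((c.choose (a + 1) : ℝ) * (a + 1)) ^ 2 := by ring
      _ = _ := by rw [hccR]; ring
  have G5 : (s : ℝ) * (((w : ℝ) + e + 1) * (w + e)) + A0 * (((a : ℝ) + 1) * a)
      = s0 * (((d : ℝ) + 2 * (a + 1)) * (d + 2 * (a + 1) - 1)) + A * (((e : ℝ) + 1) * e) := by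
    have := congrArg (fun n : ℕ => (n : ℝ)) F3
    push_cast [Nat.cast_choose_two] at this
    linear_combination 2 * this
  have hcR : (c : ℝ) = a + 1 + e := by exact_mod_cast he
  have hvR : (v : ℝ) = d + c + a + w := by exact_mod_cast hw
  have ha1 : (1 : ℝ) ≤ a := by exact_mod_cast (by omega : 1 ≤ a)
  have hd0 : (0 : ℝ) ≤ d := by positivity
  have hw1R : (1 : ℝ) ≤ w := by exact_mod_cast hw1
  have he1R : (1 : ℝ) ≤ e := by exact_mod_cast he1
  have hApos : (0 : ℝ) < A := by exact_mod_cast hAposN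
  have hubR : ((a : ℝ) + 1) * v < (d + 2 * (a + 1)) * c := by exact_mod_cast hub
  have hcbR : 2 * (a : ℝ) + 3 ≤ c := by exact_mod_cast hcbig
  have AC := algebra_core (s : ℝ) s0 A A0 (P * ((c.choose a : ℝ) * c.choose a))
    (P * ((c.choose (a + 1) : ℝ) * c.choose (a + 1))) (d + a + 1) (a + 1) (e + 1) w (w + e - 1)
    (by positivity) (by positivity) (by linarith) (by ring) G1
    (by linear_combination G2) (by linear_combination G3) G4 (by linear_combination G5)
  obtain ⟨L, hL⟩ : ∃ L : ℝ, L = (2 * (c : ℝ) - 2 * ((a + 2 : ℕ) : ℝ) + 2) * (d : ℝ)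
    + 2 * (((a + 2 : ℕ) : ℝ) - 1) * (c : ℝ) - 3 * ((a + 2 : ℕ) : ℝ) + 4 := ⟨_, rfl⟩
  obtain ⟨D, hD⟩ : ∃ D : ℝ, D = 4 * (((a + 2 : ℕ) : ℝ) - 1) * ((c : ℝ) - ((a + 2 : ℕ) : ℝ) + 1)
        * ((c : ℝ) - 2 * ((a + 2 : ℕ) : ℝ) + 3) * (d : ℝ) ^ 2
      + 4 * (((a + 2 : ℕ) : ℝ) - 1) * (3 * ((a + 2 : ℕ) : ℝ) - 4)
        * ((c : ℝ) - ((a + 2 : ℕ) : ℝ) + 1) * ((c : ℝ) - 2 * ((a + 2 : ℕ) : ℝ) + 3) * (d : ℝ)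
      + (((a + 2 : ℕ) : ℝ) - 1) ^ 2 * (4 * (2 * ((a + 2 : ℕ) : ℝ) - 3) * (c : ℝ) ^ 2
        - 4 * (3 * ((a + 2 : ℕ) : ℝ) - 4) * (2 * ((a + 2 : ℕ) : ℝ) - 3) * (c : ℝ)
        + 16 * ((a + 2 : ℕ) : ℝ) ^ 3 - 63 * ((a + 2 : ℕ) : ℝ) ^ 2 + 80 * ((a + 2 : ℕ) : ℝ)
        - 32) := ⟨_, rfl⟩
  rw [← hL, ← hD] at hγ₁
  have hiR : ((a + 2 : ℕ) : ℝ) = a + 2 := by push_cast; ring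
  have QF := quartic_factor (v : ℝ) c d ((a + 2 : ℕ) : ℝ) ((d + c : ℕ) : ℝ) (e + 1) (a + 1)
    (d + a + 1) w (w + e - 1) L D (by push_cast; ring) (by rw [hiR, hcR]; ring)
    (by rw [hiR]; ring) (by rw [hiR]; ring) (by rw [hiR, hvR]; push_cast; ring) (by ring) hL hD
  obtain ⟨q, hq⟩ : ∃ q : ℝ, q = (2 * (((a + 2 : ℕ) : ℝ) - 1) * (((a + 2 : ℕ) : ℝ) - 2)
    * ((v : ℝ) - ((d + c : ℕ) : ℝ)) - (((a + 2 : ℕ) : ℝ) - 1) * L) ^ 2 - D := ⟨_, rfl⟩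
  rw [← hq] at QF
  -- the variance is a positive multiple of `q`
  obtain ⟨K1, hK1, K2, hK2, hKq⟩ : ∃ K1 : ℝ, 0 < K1 ∧ ∃ K2 : ℝ, 0 < K2 ∧
      ((s : ℝ) * ((A : ℝ) + P * ((c.choose a : ℝ) * c.choose a)) - (A : ℝ) ^ 2) * K1
        = q * K2 := by
    refine ⟨4 * ((a : ℝ) + 1) * ((a : ℝ) + 1 - 1) * ((((w : ℝ) + (e + 1)) * (w + (e + 1) - 1))
      * (d + a + 1) * (a + 1) * (w + e - 1) * ((d + a + 1) * (e + 1) * (e + 1 - 1))), ?_,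
      (A : ℝ) ^ 2 * (e + 1) * (((d + 2 * (((a + 2 : ℕ) : ℝ) - 1)) * c
        - (((a + 2 : ℕ) : ℝ) - 1) * v) * w), ?_, ?_⟩
    · have y1 : (0 : ℝ) < (a : ℝ) + 1 - 1 := by linarith
      have y2 : (0 : ℝ) < (w : ℝ) + (e + 1) - 1 := by linarith
      have y3 : (0 : ℝ) < (w : ℝ) + e - 1 := by linarith
      have y4 : (0 : ℝ) < (e : ℝ) + 1 - 1 := by linarith
      positivity
    · have y1 : (0 : ℝ) < (d + 2 * (((a + 2 : ℕ) : ℝ) - 1)) * c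
        - (((a + 2 : ℕ) : ℝ) - 1) * v := by
        rw [hiR]; linarith
      have y2 : (0 : ℝ) < w := by linarith
      positivity
    · linear_combination (4 * ((a : ℝ) + 1) * ((a : ℝ) + 1 - 1)) * AC
        + ((A : ℝ) ^ 2 * (e + 1)) * QF
  have hq0 : 0 ≤ q := by
    have : 0 ≤ q * K2 := by rw [← hKq]; exact mul_nonneg V1 hK1.le
    exact nonneg_of_mul_nonneg_left this hK2
  have hqiff : q = 0 ↔ (s : ℝ) * ((A : ℝ) + P * ((c.choose a : ℝ) * c.choose a))
      - (A : ℝ) ^ 2 = 0 := by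
    constructor
    · intro h
      rw [h, zero_mul] at hKq
      exact (mul_eq_zero.mp hKq).resolve_right hK1.ne'
    · intro h
      rw [h, zero_mul] at hKq
      exact (mul_eq_zero.mp hKq.symm).resolve_right hK2.ne'
  have hlt : 2 * (((a + 2 : ℕ) : ℝ) - 1) * (((a + 2 : ℕ) : ℝ) - 2)
    * ((v : ℝ) - ((d + c : ℕ) : ℝ)) - (((a + 2 : ℕ) : ℝ) - 1) * L < 0 := by
    rw [hL, hiR]
    push_cast
    have z1 : 2 * (a : ℝ) * (((a : ℝ) + 1) * v) < 2 * (a : ℝ) * ((d + 2 * (a + 1)) * c) :=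
      mul_lt_mul_of_pos_left hubR (by linarith)
    have z2 : 0 ≤ (d : ℝ) * (c - (a + 1)) := mul_nonneg hd0 (by linarith)
    have z3 : 0 ≤ ((a : ℝ) + 1) * (2 * c - 3 * a - 2) := mul_nonneg (by linarith) (by linarith)
    linarith only [z1, z2, z3]
  obtain ⟨R1, R2⟩ := root_bound (v : ℝ) ((d + c : ℕ) : ℝ) ((a + 2 : ℕ) : ℝ) L D γ₁
    (by rw [hiR]; linarith) hγ₁ hlt (by rw [← hq]; exact hq0)
  refine ⟨R1, ?_⟩
  rw [R2, ← hq, hqiff, V2]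
  rfl
end

section
/- Let 𝓓 = (Ω, 𝓑) be a β(i) design with parameter (v, k, d), where i ≥ 3 and v ≥ 2k. If 𝓓 is not a β(i−1) design, then 2(i−1) ≤ k−d < i·(3i−2+√(i²+12i−12))/(2(i−2)); in particular, if i ≥ 8 then 2(i−1) ≤ k−d ≤ 2i+6. -/
open Finset

variable {α : Type*} [Fintype α] [DecidableEq α]

/-- Johnson adjacency operator. -/
def jA (F : Finset α → ℝ) (X : Finset α) : ℝ :=
  ∑ x ∈ X, ∑ y ∈ Xᶜ, F (insert y (X.erase x))

/-- Down operator. -/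
def jD (F : Finset α → ℝ) (W : Finset α) : ℝ := ∑ y ∈ Wᶜ, F (insert y W)

/-- Up operator. -/
def jU (F : Finset α → ℝ) (X : Finset α) : ℝ := ∑ x ∈ X, F (X.erase x)

lemma jUD (F : Finset α → ℝ) (X : Finset α) :
    jU (jD F) X = X.card * F X + jA F X := by
  unfold jU jD jA
  have : ∀ x ∈ X, ∑ y ∈ (X.erase x)ᶜ, F (insert y (X.erase x)) =
      F X + ∑ y ∈ Xᶜ, F (insert y (X.erase x)) := by
    intro x hx
    have h : (X.erase x)ᶜ = insert x Xᶜ := by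
      ext z; simp
    rw [h, sum_insert (by simpa using hx), insert_erase hx]
  rw [sum_congr rfl this, sum_add_distrib]
  simp

lemma jDU (F : Finset α → ℝ) (X : Finset α) :
    jD (jU F) X = (Xᶜ.card : ℝ) * F X + jA F X := by
  unfold jU jD jA
  have : ∀ y ∈ Xᶜ, ∑ x ∈ insert y X, F ((insert y X).erase x) =
      F X + ∑ x ∈ X, F (insert y (X.erase x)) := by
    intro y hy
    have hy' : y ∉ X := by simpa using hy
    rw [sum_insert hy', erase_insert hy']
    congr 1
    refine sum_congr rfl fun x hx => ?_
    rw [erase_insert_of_ne]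
    rintro rfl; exact hy' hx
  rw [sum_congr rfl this, sum_add_distrib, sum_comm]
  simp

lemma jA_down (F : Finset α → ℝ) (N : ℕ) (l : ℝ)
    (h : ∀ X : Finset α, X.card = N + 1 → jA F X = l * F X) :
    ∀ W : Finset α, W.card = N →
      jA (jD F) W = (l + 2 * N + 1 - Fintype.card α) * jD F W := by
  intro W hW
  have h1 := jDU (jD F) W
  have h2 : jD (jU (jD F)) W = (N + 1 + l) * jD F W := by
    conv_lhs => unfold jD
    conv_rhs => unfold jD
    rw [mul_sum]
    refine sum_congr rfl fun y hy => ?_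
    have hy' : y ∉ W := by simpa using hy
    have hc : (insert y W).card = N + 1 := by rw [card_insert_of_notMem hy', hW]
    have := jUD F (insert y W)
    unfold jD at this
    rw [this, h _ hc, hc]; push_cast; ring
  have h3 : (Wᶜ.card : ℝ) = Fintype.card α - N := by
    rw [card_compl, Nat.cast_sub (card_le_univ W), hW]
  rw [h3] at h1
  linarith

lemma jA_zero_of_down (F : Finset α → ℝ) (N : ℕ) (l : ℝ)
    (h : ∀ X : Finset α, X.card = N + 1 → jA F X = l * F X)
    (hl : l + (N + 1) ≠ 0)
    (h0 : ∀ W : Finset α, W.card = N → jD F W = 0) :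
    ∀ X : Finset α, X.card = N + 1 → F X = 0 := by
  intro X hX
  have h1 := jUD F X
  have h2 : jU (jD F) X = 0 := by
    unfold jU
    refine sum_eq_zero fun x hx => h0 _ ?_
    rw [card_erase_of_mem hx, hX]; rfl
  rw [h2, h X hX, hX] at h1
  have : (l + (N + 1)) * F X = 0 := by push_cast at h1; linarith
  exact (mul_eq_zero.1 this).resolve_left hl

lemma jD_adj (F G : Finset α → ℝ) (N : ℕ) :
    ∑ X ∈ powersetCard (N + 1) (univ : Finset α), F X * jU G X =
    ∑ W ∈ powersetCard N (univ : Finset α), jD F W * G W := by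
  unfold jU jD
  simp_rw [mul_sum, sum_mul]
  rw [sum_sigma', sum_sigma']
  refine sum_bij' (fun p _ => ⟨p.1.erase p.2, p.2⟩) (fun p _ => ⟨insert p.2 p.1, p.2⟩) ?_ ?_ ?_ ?_ ?_
  · rintro ⟨X, x⟩ h
    simp only [mem_sigma, mem_powersetCard, subset_univ, true_and, mem_compl] at h ⊢
    refine ⟨?_, by simp⟩
    rw [card_erase_of_mem h.2, h.1]; rfl
  · rintro ⟨X, x⟩ h
    simp only [mem_sigma, mem_powersetCard, subset_univ, true_and, mem_compl] at h ⊢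
    refine ⟨?_, by simp⟩
    rw [card_insert_of_notMem h.2, h.1]
  · rintro ⟨X, x⟩ h
    simp only [mem_sigma, mem_powersetCard, subset_univ, true_and, mem_compl] at h ⊢
    simp [insert_erase h.2]
  · rintro ⟨X, x⟩ h
    simp only [mem_sigma, mem_powersetCard, subset_univ, true_and, mem_compl] at h ⊢
    simp [erase_insert h.2]
  · rintro ⟨X, x⟩ h
    simp only [mem_sigma, mem_powersetCard, subset_univ, true_and, mem_compl] at h ⊢
    simp [insert_erase h.2]

lemma jA_neg (F : Finset α → ℝ) (N : ℕ) (l : ℝ)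
    (h : ∀ X : Finset α, X.card = N + 1 → jA F X = l * F X)
    (hl : l + (N + 1) < 0) :
    ∀ X : Finset α, X.card = N + 1 → F X = 0 := by
  have h1 := jD_adj F (jD F) N
  have h2 : ∑ X ∈ powersetCard (N + 1) (univ : Finset α), F X * jU (jD F) X =
      (l + (N + 1)) * ∑ X ∈ powersetCard (N + 1) (univ : Finset α), F X ^ 2 := by
    rw [mul_sum]
    refine sum_congr rfl fun X hX => ?_
    have hc := (mem_powersetCard.1 hX).2
    rw [jUD, h X hc, hc]; push_cast; ring
  have h3 : 0 ≤ ∑ W ∈ powersetCard N (univ : Finset α), jD F W * jD F W :=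
    sum_nonneg fun W _ => mul_self_nonneg _
  have h4 : 0 ≤ ∑ X ∈ powersetCard (N + 1) (univ : Finset α), F X ^ 2 :=
    sum_nonneg fun W _ => sq_nonneg _
  have h5 : ∑ X ∈ powersetCard (N + 1) (univ : Finset α), F X ^ 2 = 0 := by nlinarith
  rw [sum_eq_zero_iff_of_nonneg (fun _ _ => sq_nonneg _)] at h5
  intro X hX
  have := h5 X (mem_powersetCard.2 ⟨subset_univ _, hX⟩)
  exact pow_eq_zero_iff (two_ne_zero) |>.1 this

/-- No eigenvalue strictly between `θ_{N-1}` and `θ_{N-2}` (with `N = M + 3`). -/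
lemma johnson_gap (F : Finset α → ℝ) (M : ℕ) (l : ℝ) (v : ℝ) (hv : (Fintype.card α : ℝ) = v)
    (h : ∀ X : Finset α, X.card = M + 3 → jA F X = l * F X)
    (hvN : 2 * ((M : ℝ) + 3) ≤ v)
    (h1 : v - 3 * (M + 3) + 2 < l) (h2 : l < 2 * v - 5 * (M + 3) + 6) :
    ∀ X : Finset α, X.card = M + 3 → F X = 0 := by
  have a1 := jA_down F (M + 2) l h
  have a2 := jA_down (jD F) (M + 1) _ a1
  rw [hv] at a1 a2
  push_cast at a1 a2
  have z2 := jA_neg (jD (jD F)) M _ a2 (by linarith)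
  have z1 := jA_zero_of_down (jD F) (M + 1) _ a1 (by push_cast; intro hh; linarith) z2
  exact jA_zero_of_down F (M + 2) l h (by push_cast; intro hh; linarith) z1


/-- Partial sums of the left eigenvector of the quotient matrix. -/
noncomputable def seqT (N q a l : ℝ) : ℕ → ℝ
  | 0 => 0
  | 1 => 1
  | (s + 2) => ((l - N * (q + a) + ((s : ℝ) + 1) * (a + s + 1) + (N - s) * (q - s)) *
      seqT N q a l (s + 1) - (N - s) * (q - s) * seqT N q a l s) / (((s : ℝ) + 1) * (a + s + 1))

lemma seqT_cont (N q a : ℝ) (s : ℕ) :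
    Continuous (fun l => seqT N q a l s) ∧ Continuous (fun l => seqT N q a l (s + 1)) := by
  induction s with
  | zero => simp [seqT, continuous_const]
  | succ s ih =>
    refine ⟨ih.2, ?_⟩
    simp only [seqT]
    have h1 := ih.1
    have h2 := ih.2
    fun_prop

lemma choose_step (n s : ℕ) :
    ((n.choose (s + 1) : ℕ) : ℝ) = (n.choose s : ℝ) * ((n : ℝ) - s) / (s + 1) := by
  have hs : ((s : ℝ) + 1) ≠ 0 := by positivity
  rw [eq_div_iff hs]
  have h := Nat.choose_succ_right_eq n s
  rcases le_or_gt s n with h1 | h1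
  · have := congrArg (Nat.cast : ℕ → ℝ) h
    push_cast [Nat.cast_sub h1] at this
    exact this
  · rw [Nat.choose_eq_zero_of_lt h1, Nat.choose_eq_zero_of_lt (by omega)]; simp

lemma seqT_one (n : ℕ) (N q a l : ℝ) (hn : (n : ℝ) = N - 1) (ha : 0 ≤ a) (hN : 3 ≤ N)
    (hl : l = q + a - 2 * N + 2) (s : ℕ) :
    (seqT N q a l (s + 1) = (-1) ^ s * (n.choose s : ℝ) *
      (((a + 1) * (N - 1 - s) - (q - N + 1) * s) / ((a + 1) * (N - 1)))) ∧
    (seqT N q a l (s + 2) = (-1) ^ (s + 1) * (n.choose (s + 1) : ℝ) *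
      (((a + 1) * (N - 1 - (s + 1)) - (q - N + 1) * (s + 1)) / ((a + 1) * (N - 1)))) := by
  have h1 : a + 1 ≠ 0 := by positivity
  have h2 : N - 1 ≠ 0 := by intro h; linarith
  induction s with
  | zero =>
    constructor
    · simp [seqT]; field_simp
    · simp [seqT, hn, hl]; field_simp; ring
  | succ s ih =>
    refine ⟨by simpa using ih.2, ?_⟩
    rw [seqT]
    have e1 := ih.1
    have e2 := ih.2
    rw [show s + 1 + 1 = s + 2 from rfl, e1, e2, choose_step n (s + 1), choose_step n s, hn, hl]
    have h3 : ((s : ℝ) + 1) ≠ 0 := by positivity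
    have h4 : ((s : ℝ) + 1 + 1) ≠ 0 := by positivity
    have h5 : (a + ((s : ℝ) + 1) + 1) ≠ 0 := by positivity
    push_cast
    simp only [pow_succ]
    field_simp
    ring

lemma seqT_two (n : ℕ) (N q a l : ℝ) (hn : (n : ℝ) = N - 1) (ha : 0 ≤ a) (hN : 3 ≤ N)
    (hl : l = 2 * q + 2 * a - 3 * N + 6) (s : ℕ) :
    (seqT N q a l (s + 1) = (-1) ^ s * (n.choose s : ℝ) *
      (((a + 2) * (a + 1) * (N - 1 - s) * (N - 2 - s) - 2 * (a + 2) * (q - N + 2) * s * (N - 1 - s)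
        + (q - N + 2) * (q - N + 1) * s * (s - 1))
        / ((a + 2) * (a + 1) * (N - 1) * (N - 2)))) ∧
    (seqT N q a l (s + 2) = (-1) ^ (s + 1) * (n.choose (s + 1) : ℝ) *
      (((a + 2) * (a + 1) * (N - 1 - (s + 1)) * (N - 2 - (s + 1))
        - 2 * (a + 2) * (q - N + 2) * (s + 1) * (N - 1 - (s + 1))
        + (q - N + 2) * (q - N + 1) * (s + 1) * s)
        / ((a + 2) * (a + 1) * (N - 1) * (N - 2)))) := by
  have h1 : a + 1 ≠ 0 := by positivity
  have h1' : a + 2 ≠ 0 := by positivity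
  have h2 : N - 1 ≠ 0 := by intro h; linarith
  have h2' : N - 2 ≠ 0 := by intro h; linarith
  induction s with
  | zero =>
    constructor
    · simp [seqT]; field_simp
    · simp [seqT, hn, hl]; field_simp; ring
  | succ s ih =>
    refine ⟨by simpa using ih.2, ?_⟩
    rw [seqT]
    have e1 := ih.1
    have e2 := ih.2
    rw [show s + 1 + 1 = s + 2 from rfl, e1, e2, choose_step n (s + 1), choose_step n s, hn, hl]
    have h3 : ((s : ℝ) + 1) ≠ 0 := by positivity
    have h4 : ((s : ℝ) + 1 + 1) ≠ 0 := by positivity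
    have h5 : (a + ((s : ℝ) + 1) + 1) ≠ 0 := by positivity
    push_cast
    simp only [pow_succ]
    field_simp
    ring

lemma exists_root (n p : ℕ) (N q a : ℝ) (hn : (n : ℝ) = N - 1) (ha : 0 ≤ a) (hN : 3 ≤ N)
    (hp : p ≤ n) (hv : 2 * N ≤ N + q + a)
    (g1 : 0 < (a + 1) * (N - 1 - p) - (q - N + 1) * p)
    (g2 : (a + 2) * (a + 1) * (N - 1 - p) * (N - 2 - p) - 2 * (a + 2) * (q - N + 2) * p * (N - 1 - p)
        + (q - N + 2) * (q - N + 1) * p * (p - 1) < 0) :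
    ∃ l, q + a - 2 * N + 2 < l ∧ l < 2 * q + 2 * a - 3 * N + 6 ∧ seqT N q a l (p + 1) = 0 := by
  set t1 := q + a - 2 * N + 2 with ht1
  set t2 := 2 * q + 2 * a - 3 * N + 6 with ht2
  have hlt : t1 < t2 := by rw [ht1, ht2]; linarith
  set f : ℝ → ℝ := fun l => (-1) ^ p * seqT N q a l (p + 1) with hf
  have hc : Continuous f := continuous_const.mul (seqT_cont N q a p).2
  have hsq : ((-1 : ℝ) ^ p) * (-1) ^ p = 1 := by rw [← mul_pow]; simp
  have hch : 0 < (n.choose p : ℝ) := by exact_mod_cast Nat.choose_pos hp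
  have v1 : 0 < f t1 := by
    simp only [hf]
    rw [(seqT_one n N q a t1 hn ha hN ht1 p).1, ← mul_assoc, ← mul_assoc, hsq, one_mul]
    have : 0 < (a + 1) * (N - 1) := mul_pos (by linarith) (by linarith)
    positivity
  have v2 : f t2 < 0 := by
    simp only [hf]
    rw [(seqT_two n N q a t2 hn ha hN ht2 p).1, ← mul_assoc, ← mul_assoc, hsq, one_mul]
    have : 0 < (a + 2) * (a + 1) * (N - 1) * (N - 2) :=
      mul_pos (mul_pos (mul_pos (by linarith) (by linarith)) (by linarith)) (by linarith)
    exact mul_neg_of_pos_of_neg hch (div_neg_of_neg_of_pos g2 this)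
  obtain ⟨l, ⟨h1, h2⟩, h3⟩ := intermediate_value_Ioo' hlt.le hc.continuousOn (show (0 : ℝ) ∈ Set.Ioo (f t2) (f t1) from ⟨v2, v1⟩)
  refine ⟨l, h1, h2, ?_⟩
  simpa [hf] using h3

/-- Weights. -/
noncomputable def seqW (N q a : ℝ) : ℕ → ℝ
  | 0 => 1
  | (s + 1) => seqW N q a s * ((N - s) * (q - s)) / (((s : ℝ) + 1) * (a + s + 1))

lemma exists_eigen (p : ℕ) (N q a l : ℝ) (ha : 0 ≤ a) (hN : (p : ℝ) ≤ N) (hq : (p : ℝ) ≤ q)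
    (h0 : seqT N q a l (p + 1) = 0) :
    ∃ c : ℕ → ℝ, c 0 = 1 ∧ (c (p + 1) = c p) ∧
      ∀ s : ℕ, s ≤ p → (N - s) * (q - s) * c (s + 1) + s * (a + s) * c (s - 1) +
        ((N - s) * (a + s) + s * (q - s)) * c s = l * c s := by
  have hW : ∀ s : ℕ, s ≤ p → 0 < seqW N q a s := by
    intro s
    induction s with
    | zero => intro _; simp [seqW]
    | succ s ih =>
      intro hs
      have hs' : (s : ℝ) + 1 ≤ p := by exact_mod_cast hs
      have := ih (by omega)
      have h1 : 0 < N - s := by linarith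
      have h2 : 0 < q - s := by linarith
      rw [seqW]; positivity
  have hrec : ∀ s : ℕ, (((s : ℝ) + 1) * (a + s + 1)) * seqT N q a l (s + 2) =
      (l - N * (q + a) + ((s : ℝ) + 1) * (a + s + 1) + (N - s) * (q - s)) *
      seqT N q a l (s + 1) - (N - s) * (q - s) * seqT N q a l s := by
    intro s
    have : (((s : ℝ) + 1) * (a + s + 1)) ≠ 0 := by positivity
    rw [seqT]; field_simp
  set d : ℕ → ℝ := fun s => (seqT N q a l (s + 1) - seqT N q a l s) / seqW N q a s with hd
  -- flux identity
  have hflux : ∀ s : ℕ, s + 1 ≤ p → seqW N q a s * ((N - s) * (q - s) * (d (s + 1) - d s)) =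
      (l - N * (q + a)) * seqT N q a l (s + 1) := by
    intro s hs
    have w0 := (hW s (by omega)).ne'
    have w1 := (hW (s + 1) hs).ne'
    have e1 : seqW N q a s * d s = seqT N q a l (s + 1) - seqT N q a l s := by
      simp only [hd]; field_simp
    have e2 : seqW N q a (s + 1) * d (s + 1) = seqT N q a l (s + 2) - seqT N q a l (s + 1) := by
      simp only [hd]; field_simp
    have e3 : seqW N q a (s + 1) * (((s : ℝ) + 1) * (a + s + 1)) =
        seqW N q a s * ((N - s) * (q - s)) := by
      have : (((s : ℝ) + 1) * (a + s + 1)) ≠ 0 := by positivity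
      rw [seqW]; field_simp
    have e4 := hrec s
    linear_combination (-(d (s + 1))) * e3 + (((s : ℝ) + 1) * (a + s + 1)) * e2
      - (N - s) * (q - s) * e1 + e4
  refine ⟨fun s => d (min s p), by simp [hd, seqT, seqW], by simp, ?_⟩
  intro s hs
  simp only [min_eq_left hs, min_eq_left (show s - 1 ≤ p by omega)]
  -- upward flux
  have hup : seqW N q a s * ((N - s) * (q - s) * (d (min (s + 1) p) - d s)) =
      (l - N * (q + a)) * seqT N q a l (s + 1) := by
    rcases Nat.lt_or_ge s p with h | h
    · rw [min_eq_left (show s + 1 ≤ p by omega)]; exact hflux s h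
    · have : s = p := le_antisymm hs h
      subst this
      rw [h0]; simp
  have hdown : seqW N q a s * (s * (a + s) * (d s - d (s - 1))) =
      (l - N * (q + a)) * seqT N q a l s := by
    rcases s with _ | s
    · simp [seqT]
    · have e3 : seqW N q a (s + 1) * (((s : ℝ) + 1) * (a + s + 1)) =
        seqW N q a s * ((N - s) * (q - s)) := by
        have : (((s : ℝ) + 1) * (a + s + 1)) ≠ 0 := by positivity
        rw [seqW]; field_simp
      have := hflux s hs
      push_cast
      linear_combination this + (d (s + 1) - d s) * e3
  have w0 := hW s hs
  have e1 : seqW N q a s * d s = seqT N q a l (s + 1) - seqT N q a l s := by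
    simp only [hd]; field_simp
  have : seqW N q a s * ((N - s) * (q - s) * d (min (s + 1) p) + s * (a + s) * d (s - 1) +
        ((N - s) * (a + s) + s * (q - s)) * d s - l * d s) = 0 := by
    linear_combination hup - hdown - (l - N * (q + a)) * e1
  have := (mul_eq_zero.1 this).resolve_left w0.ne'
  linarith


lemma card_inter3 (X B C : Finset α) (d : ℕ) (h : (B ∩ C).card ≤ d) :
    (X ∩ B).card + (X ∩ C).card ≤ X.card + d := by
  have h1 := card_union_add_card_inter (X ∩ B) (X ∩ C)
  have h2 : ((X ∩ B) ∪ (X ∩ C)).card ≤ X.card := by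
    apply card_le_card; intro x; simp only [mem_union, mem_inter]; tauto
  have h3 : ((X ∩ B) ∩ (X ∩ C)).card ≤ (B ∩ C).card := by
    apply card_le_card; intro x; simp only [mem_inter]; tauto
  omega

lemma beta_step1 (𝓑 : Finset (Finset α)) (v k d i : ℕ) (hcv : Fintype.card α = v)
    (hk : ∀ B ∈ 𝓑, B.card = k)
    (hd : ∀ B ∈ 𝓑, ∀ C ∈ 𝓑, B ≠ C → (B ∩ C).card ≤ d) (hi : 3 ≤ i)
    (hex : ∀ X : Finset α, X.card + 1 = d + 2 * i → ∃ B ∈ 𝓑, d + i ≤ (X ∩ B).card)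
    (hvi : d + 2 * i ≤ v + 1)
    (X : Finset α) (hX : X.card + 3 = d + 2 * i)
    (hbad : ∀ B ∈ 𝓑, (X ∩ B).card + 2 ≤ d + i) :
    d + i ≤ k ∧ ((v : ℤ) - d - 2 * i + 2) * (i - 1) ≤ ((d : ℤ) + 2 * i - 3) * (k - d - i + 1) := by
  have hcX : (Xᶜ).card + X.card = v := by rw [← hcv]; have := card_compl_add_card X; omega
  obtain ⟨p, hp⟩ : (Xᶜ).Nonempty := by rw [← card_pos]; omega
  have hpX : p ∉ X := by simpa using hp
  set L := 𝓑.filter (fun B => p ∈ B ∧ (X ∩ B).card + 2 = d + i) with hL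
  have key : ∀ y ∈ (Xᶜ).erase p, ∃ B ∈ L, y ∈ B := by
    intro y hy
    simp only [mem_erase, mem_compl] at hy
    obtain ⟨B, hB, hBc⟩ := hex (insert y (insert p X)) (by
      rw [card_insert_of_notMem (by simp [hy.1, hy.2]), card_insert_of_notMem hpX]; omega)
    have hb := hbad B hB
    have hyB : y ∈ B := by
      by_contra h
      rw [insert_inter_of_notMem h] at hBc
      have : (insert p X ∩ B).card ≤ (insert p (X ∩ B)).card := by
        apply card_le_card; intro x; simp only [mem_inter, mem_insert]; tauto
      have := card_insert_le p (X ∩ B); omega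
    have hpB : p ∈ B := by
      by_contra h
      rw [insert_inter_of_mem hyB, insert_inter_of_notMem h] at hBc
      have := card_insert_le y (X ∩ B); omega
    refine ⟨B, ?_, hyB⟩
    simp only [hL, mem_filter]
    refine ⟨hB, hpB, ?_⟩
    rw [insert_inter_of_mem hyB, insert_inter_of_mem hpB] at hBc
    have := card_insert_le y (insert p (X ∩ B)); have := card_insert_le p (X ∩ B); omega
  have hpos : ((Xᶜ).erase p).Nonempty := by
    rw [← card_pos, card_erase_of_mem hp]; omega
  have hsz : ∀ B ∈ L, ((B \ X).erase p).card + d + i = k + 1 := by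
    intro B hB
    simp only [hL, mem_filter] at hB
    have h1 := card_sdiff_add_card_inter B X
    rw [inter_comm, hk B hB.1] at h1
    have h2 := card_erase_add_one (s := B \ X) (a := p) (by simp [hB.2.1, hpX])
    omega
  have hki : d + i ≤ k := by
    obtain ⟨y, hy⟩ := hpos
    obtain ⟨B, hB, hyB⟩ := key y hy
    have h := hsz B hB
    simp only [mem_erase, mem_compl] at hy
    have : 0 < ((B \ X).erase p).card := card_pos.2 ⟨y, by simp [hy.1, hy.2, hyB]⟩
    omega
  refine ⟨hki, ?_⟩
  have c1 : ((Xᶜ).erase p).card ≤ L.card * (k + 1 - d - i) := by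
    calc _ ≤ (L.biUnion (fun B => (B \ X).erase p)).card := by
          apply card_le_card
          intro y hy
          obtain ⟨B, hB, hyB⟩ := key y hy
          simp only [mem_erase, mem_compl] at hy
          simp only [mem_biUnion, mem_erase, mem_sdiff]
          exact ⟨B, hB, hy.1, hyB, hy.2⟩
      _ ≤ _ := by
          apply card_biUnion_le_card_mul
          intro B hB; have := hsz B hB; omega
  have c2 : L.card * (i - 1) ≤ X.card := by
    have hdis : (L : Set (Finset α)).PairwiseDisjoint (fun B => X \ B) := by
      intro B hB C hC hne
      simp only [hL, coe_filter, Set.mem_ofPred_eq] at hB hC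
      have h1 := hd B hB.1 C hC.1 hne
      have h2 : (insert p (X ∩ B ∩ C)).card ≤ (B ∩ C).card := by
        apply card_le_card; intro x; simp only [mem_inter, mem_insert]
        rintro (rfl | h)
        · exact ⟨hB.2.1, hC.2.1⟩
        · exact ⟨h.1.2, h.2⟩
      rw [card_insert_of_notMem (by simp [hpX])] at h2
      have h3 := card_union_add_card_inter (X \ B) (X \ C)
      have h4 := card_sdiff_add_card_inter X B
      have h5 := card_sdiff_add_card_inter X C
      have h6 : ((X \ B) ∪ (X \ C)).card + (X ∩ B ∩ C).card = X.card := by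
        have : (X \ B) ∪ (X \ C) = X \ (B ∩ C) := by
          ext x; simp only [mem_union, mem_sdiff, mem_inter]; tauto
        rw [this, inter_assoc]; exact card_sdiff_add_card_inter _ _
      show Disjoint (X \ B) (X \ C)
      rw [disjoint_iff_inter_eq_empty, ← card_eq_zero]
      omega
    have := card_biUnion hdis
    rw [sum_congr rfl (g := fun _ => i - 1), sum_const, smul_eq_mul] at this
    · rw [← this]; apply card_le_card
      intro x; simp only [mem_biUnion, mem_sdiff]; rintro ⟨B, _, h, _⟩; exact h
    · intro B hB
      simp only [hL, mem_filter] at hB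
      have h4 := card_sdiff_add_card_inter X B
      omega
  rw [card_erase_of_mem hp] at c1
  obtain ⟨a, rfl⟩ := Nat.exists_eq_add_of_le hki
  obtain ⟨j, rfl⟩ := Nat.exists_eq_add_of_le hi
  have e1 : ((v : ℤ) - d - 2 * (3 + j) + 2) ≤ L.card * (a + 1) := by
    have h : ((Xᶜ).card - 1) ≤ L.card * (a + 1) := by
      convert c1 using 2; omega
    zify at h hcX hX
    rw [Nat.cast_sub (by exact card_pos.2 ⟨p, hp⟩)] at h
    push_cast at *
    linarith
  have e2 : (L.card : ℤ) * (2 + j) ≤ d + 2 * (3 + j) - 3 := by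
    have h : L.card * (2 + j) ≤ X.card := by convert c2 using 2; omega
    zify at h hX; linarith
  push_cast
  have f1 := mul_le_mul_of_nonneg_right e1 (by positivity : (0 : ℤ) ≤ 2 + j)
  have f2 := mul_le_mul_of_nonneg_right e2 (by positivity : (0 : ℤ) ≤ a + 1)
  linarith

lemma beta_step2 (𝓑 : Finset (Finset α)) (v k d i : ℕ) (hcv : Fintype.card α = v)
    (hne : 𝓑.Nonempty)
    (hk : ∀ B ∈ 𝓑, B.card = k)
    (hd : ∀ B ∈ 𝓑, ∀ C ∈ 𝓑, B ≠ C → (B ∩ C).card ≤ d) 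
    (hex : ∀ X : Finset α, X.card + 1 = d + 2 * i → ∃ B ∈ 𝓑, d + i ≤ (X ∩ B).card)
    (hki : d + i ≤ k) (hv : 2 * k ≤ v) :
    ((k : ℤ) - d - i) * (d + 2 * i) ≤ i * (v - d - 2 * i) := by
  obtain ⟨B, hB⟩ := hne
  have hBk := hk B hB
  obtain ⟨Y, hYB, hY⟩ := exists_subset_card_eq (s := B) (n := d + i) (by omega)
  have hBc := card_compl_add_card B
  obtain ⟨W, hWB, hW⟩ := exists_subset_card_eq (s := Bᶜ) (n := i) (by omega)
  have hdj : Disjoint Y W := disjoint_of_subset_left hYB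
    (disjoint_of_subset_right hWB disjoint_compl_right)
  set Z := Y ∪ W with hZ
  have hZc : Z.card = d + 2 * i := by rw [hZ, card_union_of_disjoint hdj]; omega
  have hZB : (Z ∩ B).card = d + i := by
    rw [← hY]; congr 1; ext x
    have := @hYB x; have := @hWB x
    simp only [hZ, mem_inter, mem_union, mem_compl] at *; tauto
  have hle : ∀ C ∈ 𝓑, (Z ∩ C).card ≤ d + i := by
    intro C hC
    by_cases h : B = C
    · rw [← h, hZB]
    · have := card_inter3 Z B C d (hd B hB C hC h); omega
  set M := 𝓑.filter (fun C => (Z ∩ C).card = d + i) with hM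
  have hs1 : ∀ C ∈ M, (Z \ C).card = i := by
    intro C hC
    have h4 := card_sdiff_add_card_inter Z C
    simp only [hM, mem_filter] at hC; omega
  have c1 : Z.card ≤ M.card * i := by
    calc _ ≤ (M.biUnion (fun C => Z \ C)).card := by
          apply card_le_card
          intro z hz
          obtain ⟨C, hC, hCc⟩ := hex (Z.erase z) (by rw [card_erase_add_one hz, hZc])
          have h1 := hle C hC
          have h2 : (Z.erase z ∩ C).card ≤ (Z ∩ C).card :=
            card_le_card (inter_subset_inter_right (erase_subset _ _))
          simp only [mem_biUnion, mem_sdiff]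
          refine ⟨C, ?_, hz, ?_⟩
          · simp only [hM, mem_filter]; exact ⟨hC, by omega⟩
          · intro hzC
            rw [erase_inter] at hCc
            have := card_erase_add_one (s := Z ∩ C) (a := z) (by simp [hz, hzC])
            omega
      _ ≤ _ := by
          apply card_biUnion_le_card_mul
          intro C hC; exact (hs1 C hC).le
  have c2 : M.card * (k - (d + i)) ≤ (Zᶜ).card := by
    have hdis : (M : Set (Finset α)).PairwiseDisjoint (fun C => C \ Z) := by
      intro B hB C hC hne
      simp only [hM, coe_filter, Set.mem_ofPred_eq] at hB hC
      have h1 := hd B hB.1 C hC.1 hne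
      have h3 := card_union_add_card_inter (Z ∩ B) (Z ∩ C)
      have h2 : ((Z ∩ B) ∪ (Z ∩ C)).card ≤ Z.card := by
        apply card_le_card; intro x; simp only [mem_union, mem_inter]; tauto
      have h5 := card_sdiff_add_card_inter (B ∩ C) Z
      have h6 : (B ∩ C) ∩ Z = (Z ∩ B) ∩ (Z ∩ C) := by
        ext x; simp only [mem_inter]; tauto
      have h7 : (B \ Z) ∩ (C \ Z) = (B ∩ C) \ Z := by
        ext x; simp only [mem_inter, mem_sdiff]; tauto
      show Disjoint (B \ Z) (C \ Z)
      rw [disjoint_iff_inter_eq_empty, ← card_eq_zero, h7]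
      rw [h6] at h5
      omega
    have := card_biUnion hdis
    rw [sum_congr rfl (g := fun _ => k - (d + i)), sum_const, smul_eq_mul] at this
    · rw [← this]; apply card_le_card
      intro x; simp only [mem_biUnion, mem_sdiff, mem_compl]; rintro ⟨B, _, _, h⟩; exact h
    · intro C hC
      simp only [hM, mem_filter] at hC
      have h4 := card_sdiff_add_card_inter C Z
      rw [inter_comm, hk C hC.1] at h4
      omega
  have hcZ := card_compl_add_card Z
  obtain ⟨a, rfl⟩ := Nat.exists_eq_add_of_le hki
  rw [Nat.add_sub_cancel_left] at c2
  have e1 : (d : ℤ) + 2 * i ≤ M.card * i := by rw [hZc] at c1; exact_mod_cast c1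
  have e2 : (M.card : ℤ) * a ≤ v - d - 2 * i := by
    zify at c2 hcZ hZc hcv; linarith
  push_cast
  have f1 := mul_le_mul_of_nonneg_right e1 (by positivity : (0 : ℤ) ≤ a)
  have f2 := mul_le_mul_of_nonneg_right e2 (by positivity : (0 : ℤ) ≤ i)
  linarith


/-- the key inequality: `D = d+i-1`, `b = k-d-2i` (so `a = b+i+1`, `al = b+1`). -/
lemma beta_ineq (i D b e : ℝ) (hi : 3 ≤ i) (hD : i ≤ D) (hb : 0 ≤ b)
    (H1 : (e - 1 + D) * (i - 1) ≤ (D - 1) * (b + i + 1))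
    (H2 : b * (D + 1) ≤ i * (e - 3))
    (Q : 0 ≤ (i - 2) * (b + 2 * i) ^ 2 - i * (3 * i - 2) * (b + 2 * i) + 2 * i ^ 2 * (i - 1)) :
    (b + 3) * (b + 2) * D * (D - 1) - 2 * (b + 3) * e * (i - 1) * D
      + e * (e - 1) * (i - 1) * (i - 2) < 0 := by
  set e0 := b * (D + 1) / i + 3 with he0
  have ipos : 0 < i := by linarith
  have h0 : i * e0 = b * (D + 1) + 3 * i := by rw [he0]; field_simp
  have hle : e0 ≤ e := by
    have : i * e0 ≤ i * e := by linarith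
    exact le_of_mul_le_mul_left this ipos
  have hG0 : i ^ 2 * ((b + 3) * (b + 2) * D * (D - 1) - 2 * (b + 3) * e0 * (i - 1) * D
      + e0 * (e0 - 1) * (i - 1) * (i - 2)) < 0 := by
    have e1 : i ^ 2 * ((b + 3) * (b + 2) * D * (D - 1) - 2 * (b + 3) * e0 * (i - 1) * D
      + e0 * (e0 - 1) * (i - 1) * (i - 2)) =
      -((i - 2) * (b + 2 * i) ^ 2 - i * (3 * i - 2) * (b + 2 * i) + 2 * i ^ 2 * (i - 1)) * D ^ 2
      - ((i^2+4*i-4)*b^2 + (i^3+20*i^2-16*i)*b + 18*i^3-12*i^2) * D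
      + (i^2-3*i+2) * (b^2+5*i*b+6*i^2) := by
      have : i ^ 2 * ((b + 3) * (b + 2) * D * (D - 1) - 2 * (b + 3) * e0 * (i - 1) * D
      + e0 * (e0 - 1) * (i - 1) * (i - 2)) = i ^ 2 * ((b + 3) * (b + 2) * D * (D - 1)) - 2 * (b + 3) * i * (i * e0) * (i - 1) * D
      + (i * e0) * (i * e0 - i) * (i - 1) * (i - 2) := by ring
      rw [this, h0]; ring
    rw [e1]
    have q1 : 0 ≤ ((i - 2) * (b + 2 * i) ^ 2 - i * (3 * i - 2) * (b + 2 * i) + 2 * i ^ 2 * (i - 1)) * D ^ 2 := by positivity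
    obtain ⟨j, rfl⟩ : ∃ j, i = j + 3 := ⟨i - 3, by ring⟩
    have hj : 0 ≤ j := by linarith
    have q2 : (((j+3)^2+4*(j+3)-4)*b^2 + ((j+3)^3+20*(j+3)^2-16*(j+3))*b + 18*(j+3)^3-12*(j+3)^2) * (j + 3)
      ≤ (((j+3)^2+4*(j+3)-4)*b^2 + ((j+3)^3+20*(j+3)^2-16*(j+3))*b + 18*(j+3)^3-12*(j+3)^2) * D := by
      apply mul_le_mul_of_nonneg_left hD
      ring_nf; positivity
    have q3 : 0 < (((j+3)^2+4*(j+3)-4)*b^2 + ((j+3)^3+20*(j+3)^2-16*(j+3))*b + 18*(j+3)^3-12*(j+3)^2) * (j + 3)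
       - ((j+3)^2-3*(j+3)+2) * (b^2+5*(j+3)*b+6*(j+3)^2) := by
      ring_nf; positivity
    linarith
  have hG0' := neg_of_mul_neg_right hG0 (by positivity)
  have hs : (i - 2) * (e + e0 - 1) - 2 * (b + 3) * D ≤ 0 := by
    have e3 : 3 ≤ e0 := by
      rw [he0]
      have : 0 ≤ b * (D + 1) / i := by
        apply div_nonneg (mul_nonneg hb (by linarith)) ipos.le
      linarith
    have := mul_le_mul_of_nonneg_left hle (by linarith : 0 ≤ i - 2)
    linarith
  have : (e - e0) * ((i - 1) * ((i - 2) * (e + e0 - 1) - 2 * (b + 3) * D)) ≤ 0 :=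
    mul_nonpos_of_nonneg_of_nonpos (by linarith) (mul_nonpos_of_nonneg_of_nonpos (by linarith) hs)
  linarith

lemma beta_concl (i m : ℕ) (hi : 3 ≤ i) (hm : 2 * i ≤ m + 1)
    (Q : ((i : ℝ) - 2) * (m : ℝ) ^ 2 - i * (3 * i - 2) * m + 2 * (i : ℝ) ^ 2 * (i - 1) < 0) :
    ((m : ℝ) < (i : ℝ) * (3 * (i : ℝ) - 2 + Real.sqrt ((i : ℝ) ^ 2 + 12 * (i : ℝ) - 12))
        / (2 * ((i : ℝ) - 2))) ∧ (8 ≤ i → m ≤ 2 * i + 6) := by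
  have hi' : (3 : ℝ) ≤ i := by exact_mod_cast hi
  constructor
  · rw [lt_div_iff₀ (by linarith)]
    have : 2 * (i - 2) * m - i * (3 * i - 2) < i * Real.sqrt ((i : ℝ) ^ 2 + 12 * (i : ℝ) - 12) := by
      apply lt_of_pow_lt_pow_left₀ 2 (by positivity)
      rw [mul_pow, Real.sq_sqrt (by nlinarith)]
      have := mul_neg_of_pos_of_neg (by linarith : (0 : ℝ) < 4 * (i - 2)) Q
      linarith
    linarith
  · intro h8
    by_contra hc
    push Not at hc
    obtain ⟨t, rfl⟩ : ∃ t, m = 2 * i + 7 + t := Nat.exists_eq_add_of_le (by omega)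
    obtain ⟨j, rfl⟩ := Nat.exists_eq_add_of_le h8
    push_cast at Q
    ring_nf at Q
    have : (0 : ℝ) ≤ j := by positivity
    have : (0 : ℝ) ≤ t := by positivity
    apply absurd Q; push Not; positivity

lemma jA_split (F : Finset α → ℝ) (X B : Finset α) (c1 c2 c3 : ℝ)
    (hup : ∀ x ∈ X ∩ B, ∀ y ∈ Xᶜ ∩ Bᶜ, F (insert y (X.erase x)) = c1)
    (hdn : ∀ x ∈ X \ B, ∀ y ∈ Xᶜ ∩ B, F (insert y (X.erase x)) = c2)
    (hs1 : ∀ x ∈ X ∩ B, ∀ y ∈ Xᶜ ∩ B, F (insert y (X.erase x)) = c3)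
    (hs2 : ∀ x ∈ X \ B, ∀ y ∈ Xᶜ ∩ Bᶜ, F (insert y (X.erase x)) = c3) :
    jA F X = ((X ∩ B).card : ℝ) * (Xᶜ ∩ Bᶜ).card * c1 + ((X \ B).card : ℝ) * (Xᶜ ∩ B).card * c2
      + (((X ∩ B).card : ℝ) * (Xᶜ ∩ B).card + ((X \ B).card : ℝ) * (Xᶜ ∩ Bᶜ).card) * c3 := by
  have hin : ∀ x, ∑ y ∈ Xᶜ, F (insert y (X.erase x)) =
      ∑ y ∈ Xᶜ ∩ B, F (insert y (X.erase x)) + ∑ y ∈ Xᶜ ∩ Bᶜ, F (insert y (X.erase x)) := by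
    intro x
    rw [← sum_union]
    · congr 1; ext y; simp only [mem_union, mem_inter, mem_compl]; tauto
    · rw [disjoint_left]; intro y; simp only [mem_inter, mem_compl]; tauto
  have hX : X = (X ∩ B) ∪ (X \ B) := by
    ext y; simp only [mem_union, mem_inter, mem_sdiff]; tauto
  have hd : Disjoint (X ∩ B) (X \ B) := by
    rw [disjoint_left]; intro y; simp only [mem_inter, mem_sdiff]; tauto
  have : jA F X = ∑ x ∈ (X ∩ B) ∪ (X \ B), ∑ y ∈ Xᶜ, F (insert y (X.erase x)) := by
    rw [← hX]; rfl
  rw [this, sum_union hd]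
  have a1 : ∑ x ∈ X ∩ B, ∑ y ∈ Xᶜ, F (insert y (X.erase x)) =
      ∑ x ∈ X ∩ B, (((Xᶜ ∩ B).card : ℝ) * c3 + ((Xᶜ ∩ Bᶜ).card : ℝ) * c1) := by
    apply sum_congr rfl
    intro x hx
    rw [hin, sum_congr rfl (hs1 x hx), sum_congr rfl (hup x hx)]; simp
  have a2 : ∑ x ∈ X \ B, ∑ y ∈ Xᶜ, F (insert y (X.erase x)) =
      ∑ x ∈ X \ B, (((Xᶜ ∩ B).card : ℝ) * c2 + ((Xᶜ ∩ Bᶜ).card : ℝ) * c3) := by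
    apply sum_congr rfl
    intro x hx
    rw [hin, sum_congr rfl (hdn x hx), sum_congr rfl (hs2 x hx)]; simp
  rw [a1, a2, sum_const, sum_const, nsmul_eq_mul, nsmul_eq_mul]
  ring

/-- The function of the distance to the nearest block is an eigenfunction. -/
lemma beta_eigen (𝓑 : Finset (Finset α)) (v k d i : ℕ) (hcv : Fintype.card α = v)
    (hk : ∀ B ∈ 𝓑, B.card = k)
    (hd : ∀ B ∈ 𝓑, ∀ C ∈ 𝓑, B ≠ C → (B ∩ C).card ≤ d) (hi : 1 ≤ i)
    (hex : ∀ X : Finset α, X.card + 1 = d + 2 * i → ∃ B ∈ 𝓑, d + i ≤ (X ∩ B).card)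
    (hkN : d + 2 * i ≤ k + 1) (hne : 𝓑.Nonempty)
    (N q a l : ℝ) (hN : N = d + 2 * i - 1) (hq : q = v - k) (ha : a = k - N) (c : ℕ → ℝ)
    (c0 : c 0 = 1) (cp : c (i - 1 + 1) = c (i - 1))
    (hc : ∀ s : ℕ, s ≤ i - 1 → (N - s) * (q - s) * c (s + 1) + s * (a + s) * c (s - 1) +
        ((N - s) * (a + s) + s * (q - s)) * c s = l * c s) :
    ∃ F : Finset α → ℝ, (∀ X : Finset α, X.card + 1 = d + 2 * i → jA F X = l * F X) ∧
      ∃ X : Finset α, X.card + 1 = d + 2 * i ∧ F X ≠ 0 := by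
  classical
  choose! f hf1 hf2 using hex
  have huniq : ∀ X : Finset α, X.card + 1 = d + 2 * i → ∀ C ∈ 𝓑, d + i ≤ (X ∩ C).card →
      f X = C := by
    intro X hX C hC hXC
    by_contra hne
    have := card_inter3 X (f X) C d (hd _ (hf1 X hX) C hC hne)
    have := hf2 X hX
    omega
  refine ⟨fun X => c (X \ f X).card, ?_, ?_⟩
  · intro X hX
    have hB := hf1 X hX
    have hXB := hf2 X hX
    set B := f X with hBdef
    set s := (X \ B).card with hs
    have hsum : s + (X ∩ B).card = X.card := card_sdiff_add_card_inter X B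
    have hsi : s ≤ i - 1 := by omega
    have n1 : ((X ∩ B).card : ℝ) = N - s := by
      rw [hN]; have : s + (X ∩ B).card + 1 = d + 2 * i := by omega
      have h : (s : ℝ) + (X ∩ B).card + 1 = d + 2 * i := by exact_mod_cast this
      linarith
    have n2' : (Xᶜ ∩ B).card + (X ∩ B).card = k := by
      rw [← hk B hB]
      have : Xᶜ ∩ B = B \ X := by ext y; simp only [mem_inter, mem_compl, mem_sdiff]; tauto
      rw [this, inter_comm X B]; exact card_sdiff_add_card_inter B X
    have n2 : ((Xᶜ ∩ B).card : ℝ) = a + s := by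
      have h : ((Xᶜ ∩ B).card : ℝ) + (X ∩ B).card = k := by exact_mod_cast n2'
      rw [ha]; linarith
    have n3' : (Xᶜ ∩ Bᶜ).card + s + k = v := by
      rw [← hcv, ← hk B hB]
      have h1 := card_compl_add_card B
      have h2 := card_sdiff_add_card_inter Bᶜ X
      have e1 : Xᶜ ∩ Bᶜ = Bᶜ \ X := by ext y; simp only [mem_inter, mem_compl, mem_sdiff]; tauto
      have e2 : X \ B = Bᶜ ∩ X := by ext y; simp only [mem_inter, mem_compl, mem_sdiff]; tauto
      rw [hs, e1, e2]; omega
    have n3 : ((Xᶜ ∩ Bᶜ).card : ℝ) = q - s := by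
      have h : ((Xᶜ ∩ Bᶜ).card : ℝ) + s + k = v := by exact_mod_cast n3'
      rw [hq]; linarith
    have hcard : ∀ x ∈ X, ∀ y, y ∉ X → (insert y (X.erase x)).card + 1 = d + 2 * i := by
      intro x hx y hy
      rw [card_insert_of_notMem (by simp [hy]), card_erase_add_one hx, hX]
    -- if the neighbour still meets B well, its block is B
    have hstay : ∀ Y : Finset α, Y.card + 1 = d + 2 * i → (Y \ B).card ≤ i - 1 → f Y = B := by
      intro Y hY hYs
      apply huniq Y hY B hB
      have := card_sdiff_add_card_inter Y B
      omega
    rw [← hc s hsi, ← n1, ← n2, ← n3]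
    apply jA_split
    · intro x hx y hy
      simp only [mem_inter, mem_compl] at hx hy
      have hYc := hcard x hx.1 y hy.1
      have hYs : (insert y (X.erase x) \ B).card = s + 1 := by
        have : insert y (X.erase x) \ B = insert y (X \ B) := by
          ext z; simp only [mem_sdiff, mem_insert, mem_erase]
          constructor
          · tauto
          · rintro (rfl | h)
            · tauto
            · exact ⟨Or.inr ⟨by rintro rfl; tauto, h.1⟩, h.2⟩
        rw [this, card_insert_of_notMem (by simp [hy.1])]
      by_cases hlt : s + 1 ≤ i - 1
      · show c _ = _
        rw [hstay _ hYc (by omega), hYs]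
      · have hse : s = i - 1 := by omega
        show c _ = _
        rw [hse, cp]
        congr 1
        set Y := insert y (X.erase x) with hY
        have hC := hf1 Y hYc
        have hYC := hf2 Y hYc
        have t1 := card_sdiff_add_card_inter Y (f Y)
        have t3 := card_sdiff_add_card_inter Y B
        have hneC : ¬ (d + i ≤ (X ∩ f Y).card) := by
          intro h
          have h1 := huniq X hX (f Y) hC h
          rw [← h1] at hYC
          change d + i ≤ (Y ∩ B).card at hYC
          omega
        have t2 : (Y ∩ f Y).card ≤ (X ∩ f Y).card + 1 := by
          calc _ ≤ (insert y (X ∩ f Y)).card := by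
                apply card_le_card; intro z
                simp only [hY, mem_inter, mem_insert, mem_erase]; tauto
            _ ≤ _ := card_insert_le _ _
        omega
    · intro x hx y hy
      simp only [mem_inter, mem_compl, mem_sdiff] at hx hy
      have hYc := hcard x hx.1 y hy.1
      have hYs : (insert y (X.erase x) \ B).card = s - 1 := by
        have : insert y (X.erase x) \ B = (X \ B).erase x := by
          ext z; simp only [mem_sdiff, mem_insert, mem_erase]
          constructor
          · rintro ⟨rfl | h, h2⟩
            · tauto
            · tauto
          · tauto
        rw [this, card_erase_of_mem (by simp [hx])]
      show c _ = _
      rw [hstay _ hYc (by omega), hYs]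
    · intro x hx y hy
      simp only [mem_inter, mem_compl] at hx hy
      have hYc := hcard x hx.1 y hy.1
      have hYs : (insert y (X.erase x) \ B) = X \ B := by
        ext z; simp only [mem_sdiff, mem_insert, mem_erase]
        constructor
        · rintro ⟨rfl | h, h2⟩
          · tauto
          · tauto
        · rintro h
          exact ⟨Or.inr ⟨by rintro rfl; tauto, h.1⟩, h.2⟩
      show c _ = _
      rw [hstay _ hYc (by rw [hYs]; omega), hYs]
    · intro x hx y hy
      simp only [mem_inter, mem_compl, mem_sdiff] at hx hy
      have hYc := hcard x hx.1 y hy.1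
      have hYs : (insert y (X.erase x) \ B).card = s := by
        have : insert y (X.erase x) \ B = insert y ((X \ B).erase x) := by
          ext z; simp only [mem_sdiff, mem_insert, mem_erase]
          constructor
          · tauto
          · rintro (rfl | h)
            · tauto
            · tauto
        rw [this, card_insert_of_notMem (by simp [hy.1]), card_erase_add_one (by simp [hx])]
      show c _ = _
      rw [hstay _ hYc (by omega), hYs]
  · obtain ⟨B, hB⟩ := hne
    have := hk B hB
    obtain ⟨X, hXB, hX⟩ := exists_subset_card_eq (s := B) (n := d + 2 * i - 1) (by omega)
    refine ⟨X, by omega, ?_⟩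
    have : f X = B := huniq X (by omega) B hB (by rw [inter_eq_left.2 hXB]; omega)
    show c _ ≠ 0
    rw [this, sdiff_eq_empty_iff_subset.2 hXB, card_empty, c0]
    exact one_ne_zero

/-- **Theorem 4 (1).** Let `𝓑` be a `β(i)` design with parameter `(v, k, d)`, `i ≥ 3`
and `v ≥ 2k`.  If `𝓑` is not a `β(i-1)` design, then
`2(i-1) ≤ k - d < i(3i - 2 + √(i² + 12i - 12))/(2(i-2))`; in particular
`2(i-1) ≤ k - d ≤ 2i + 6` for `i ≥ 8`. -/
theorem beta_design_kd_upper (𝓑 : Finset (Finset α)) (v k d i : ℕ)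
    (hB : IsBetaDesign 𝓑 v k d i) (hi : 3 ≤ i) (hv : 2 * k ≤ v)
    (hnot : ¬ IsBetaDesign 𝓑 v k d (i - 1)) :
    2 * (i - 1) ≤ k - d ∧
    ((k : ℝ) - (d : ℝ) <
      (i : ℝ) * (3 * (i : ℝ) - 2 + Real.sqrt ((i : ℝ) ^ 2 + 12 * (i : ℝ) - 12))
        / (2 * ((i : ℝ) - 2))) ∧
    (8 ≤ i → k - d ≤ 2 * i + 6) := by
  obtain ⟨hdes, -, hvi, hex0⟩ := hB
  have hdes' := hdes
  obtain ⟨hcv, h2, hdk, hkv, hk, hd, -⟩ := hdes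
  have hne : 𝓑.Nonempty := card_pos.1 (by omega)
  have hex : ∀ X : Finset α, X.card + 1 = d + 2 * i → ∃ B ∈ 𝓑, d + i ≤ (X ∩ B).card := by
    intro X hX
    obtain ⟨B, hB, -⟩ := hex0 X (by omega)
    exact ⟨B, hB.1, hB.2⟩
  obtain ⟨X, hX, hbad⟩ : ∃ X : Finset α, X.card + 3 = d + 2 * i ∧
      ∀ B ∈ 𝓑, (X ∩ B).card + 2 ≤ d + i := by
    by_contra hcon
    push Not at hcon
    apply hnot
    refine ⟨hdes', by omega, by omega, ?_⟩
    intro X hX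
    obtain ⟨B, hB, hBc⟩ := hcon X (by omega)
    refine ⟨B, ⟨hB, by omega⟩, ?_⟩
    rintro C ⟨hC, hCc⟩
    by_contra hneq
    have := card_inter3 X C B d (hd C hC B hB hneq)
    omega
  obtain ⟨hki, H1⟩ := beta_step1 𝓑 v k d i hcv hk hd hi hex (by omega) X hX hbad
  have H2 := beta_step2 𝓑 v k d i hcv hne hk hd hex hki hv
  obtain ⟨r, rfl⟩ := Nat.exists_eq_add_of_le hki
  -- `a = r + 1`
  have hi2 : (3 : ℤ) ≤ i := by exact_mod_cast hi
  have hkey : (r : ℤ) + 1 ≤ d * (r + 2 - i) := by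
    have hv' : 2 * ((d : ℤ) + i + r) ≤ v := by exact_mod_cast hv
    have := mul_le_mul_of_nonneg_right hv' (by linarith : (0 : ℤ) ≤ i - 1)
    push_cast at H1
    linarith
  have hd1 : 1 ≤ d := by
    by_contra h
    have : d = 0 := by omega
    subst this
    simp at hkey; omega
  have hri : i ≤ r + 1 := by
    by_contra h
    have : (r : ℤ) + 2 - i ≤ 0 := by omega
    have := mul_nonpos_of_nonneg_of_nonpos (by positivity : (0 : ℤ) ≤ d) this
    linarith
  have hm : d + i + r - d = i + r := by omega
  have hcast : ((d + i + r : ℕ) : ℝ) - d = ((i + r : ℕ) : ℝ) := by push_cast; ring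
  rw [hm, hcast]
  refine ⟨by omega, beta_concl i (i + r) hi (by omega) ?_⟩
  by_contra hQ
  push Not at hQ
  have hiR : (3 : ℝ) ≤ i := by exact_mod_cast hi
  have hd1R : (1 : ℝ) ≤ d := by exact_mod_cast hd1
  have hriR : (i : ℝ) ≤ r + 1 := by exact_mod_cast hri
  have hvR : 2 * ((d : ℝ) + i + r) ≤ v := by exact_mod_cast hv
  have hir : i ≤ r := by
    by_contra h
    obtain rfl : i = r + 1 := by omega
    push_cast at hQ hiR
    nlinarith
  have hirR : (i : ℝ) ≤ r := by exact_mod_cast hir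
  have H1R : ((v : ℝ) - d - 2 * i + 2) * (i - 1) ≤ ((d : ℝ) + 2 * i - 3) * (r + 1) := by
    have h : ((v : ℤ) - d - 2 * i + 2) * (i - 1) ≤ ((d : ℤ) + 2 * i - 3) * (r + 1) := by
      push_cast at H1; linarith
    exact_mod_cast h
  have H2R : (r : ℝ) * (d + 2 * i) ≤ i * (v - d - 2 * i) := by
    have h : (r : ℤ) * (d + 2 * i) ≤ i * (v - d - 2 * i) := by
      push_cast at H2; linarith
    exact_mod_cast h
  have hG := beta_ineq (i : ℝ) ((d : ℝ) + i - 1) ((r : ℝ) - i)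
    ((v : ℝ) - (d + i + r) - d - 2 * i + 3) hiR (by linarith) (by linarith)
    (by linarith) (by linarith) (by push_cast at hQ; linarith)
  have hp : ((i - 1 : ℕ) : ℝ) = (i : ℝ) - 1 := by
    rw [Nat.cast_sub (by omega)]; simp
  have hn : ((d + 2 * i - 2 : ℕ) : ℝ) = ((d : ℝ) + 2 * i - 1) - 1 := by
    rw [Nat.cast_sub (by omega)]; push_cast; ring
  obtain ⟨l, hl1, hl2, hl0⟩ := exists_root (d + 2 * i - 2) (i - 1) ((d : ℝ) + 2 * i - 1)
    ((v : ℝ) - (d + i + r : ℕ)) (((d + i + r : ℕ) : ℝ) - ((d : ℝ) + 2 * i - 1)) hn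
    (by push_cast; linarith) (by linarith) (by omega) (by push_cast; linarith)
    (by rw [hp]; push_cast; linarith) (by rw [hp]; push_cast; linarith)
  obtain ⟨c, c0, cp, hc⟩ := exists_eigen (i - 1) _ _ _ l (by push_cast; linarith)
    (by rw [hp]; linarith) (by rw [hp]; push_cast; linarith) hl0
  obtain ⟨F, hF, Y, hY, hFY⟩ := beta_eigen 𝓑 v (d + i + r) d i hcv hk hd (by omega) hex
    (by omega) hne _ _ _ l rfl rfl rfl c c0 cp hc
  have hM : ((d + 2 * i - 4 : ℕ) : ℝ) = (d : ℝ) + 2 * i - 4 := by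
    rw [Nat.cast_sub (by omega)]; push_cast; ring
  exact hFY (johnson_gap F (d + 2 * i - 4) l v (by rw [hcv])
    (fun X hX => hF X (by omega)) (by rw [hM]; linarith)
    (by rw [hM]; linarith) (by rw [hM]; linarith) Y (by omega))
end
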